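/- Let $G$ be a simple graph on vertex set $\{1,\dots,n\}$ with edge set $E(G)$, and suppose that the complement graph of $G$ has at most $5$ edges. Let $\mathcal{M}_G$ be the set of real symmetric positive definite $n\times n$ matrices $K$ with $K_{ij}=0$ whenever $i\neq j$ and $ij\notin E(G)$, and let the maximum likelihood threshold $\mathrm{MLT}(G)$ be the smallest positive integer $m$ such that for Lebesgue-almost every real $n\times m$ matrix $X$ the function $K\mapsto \mathrm{tr}(XX^{T}K)-\log\det K$ attains a minimum on $\mathcal{M}_G$. For an integer $d\ge 0$, call $G$ $d$-independent if for Lebesgue-almost every $p:\{1,\dots,n\}\to\mathbb{R}^d$ the vectors $R_{ij}(p)\in(\mathbb{R}^d)^n$, $ij\in E(G)$, are linearly independent, where $R_{ij}(p)$ has $i$-th block $p(i)-p(j)$, $j$-th block $p(j)-p(i)$ and all other blocks zero (so $G$ is $0$-independent if and only if it has no edges). Then $$\mathrm{MLT}(G)=d+1,$$ where $d$ is the smallest nonnegative integer such that $G$ is $d$-independent. -/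

import Mathlib

open MeasureTheory Matrix

noncomputable section

/-- The objective function `K ↦ tr(S K) − log det K` of Gaussian maximum likelihood,
where `S` is the sample covariance matrix. -/
def mlObjective {n : ℕ} (S K : Matrix (Fin n) (Fin n) ℝ) : ℝ :=
  (S * K).trace - Real.log K.det

/-- The maximum likelihood threshold of a set `M` of positive definite matrices:
the smallest positive integer `d` such that for Lebesgue-almost every real `n × d`
matrix `X`, the function `K ↦ tr(X Xᵀ K) − log det K` attains a minimum on `M`. -/
def mlt (n : ℕ) (M : Set (Matrix (Fin n) (Fin n) ℝ)) : ℕ :=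
  sInf {d : ℕ | 0 < d ∧
    ∀ᵐ X : Fin n → Fin d → ℝ ∂volume,
      ∃ K ∈ M, ∀ K' ∈ M,
        mlObjective (Matrix.of X * (Matrix.of X)ᵀ) K ≤
          mlObjective (Matrix.of X * (Matrix.of X)ᵀ) K'}

/-- The Gaussian graphical model of a graph `G` on `{1,…,n}`: all symmetric positive
definite matrices whose off-diagonal entries vanish at non-edges of `G`. -/
def graphModel (n : ℕ) (G : SimpleGraph (Fin n)) : Set (Matrix (Fin n) (Fin n) ℝ) :=
  {K | K.PosDef ∧ ∀ i j, i ≠ j → ¬ G.Adj i j → K i j = 0}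

/-- The rigidity vector `R_{ij}(p)`: the block vector in `(ℝ^d)^n` whose `i`-th block is
`p i − p j`, whose `j`-th block is `p j − p i`, and whose other blocks are zero. -/
def rigidityVec {n d : ℕ} (p : Fin n → Fin d → ℝ) (i j : Fin n) : Fin n → Fin d → ℝ :=
  fun k => if k = i then p i - p j else if k = j then p j - p i else 0

/-- A graph `G` is `d`-independent if for Lebesgue-almost every `p : {1,…,n} → ℝ^d`,
the rigidity vectors `{R_{ij}(p) : ij ∈ E(G)}` are linearly independent; each edge is
listed once, as the pair `(i, j)` with `i < j`. For `d = 0` this says that `G` has no edges. -/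
def IsIndepGraph {n : ℕ} (d : ℕ) (G : SimpleGraph (Fin n)) : Prop :=
  ∀ᵐ p : Fin n → Fin d → ℝ ∂volume,
    LinearIndependent ℝ (fun e : {e : Fin n × Fin n // G.Adj e.1 e.2 ∧ e.1 < e.2} =>
      rigidityVec p e.1.1 e.1.2)

end

/-
Let `H` be the complement of `G`. The likelihood attains its optimum for the data matrix `X` if and
only if `X` has no positive semidefinite stress, a nonzero positive semidefinite matrix `K` that
vanishes on the edges of `H` and satisfies `K * X = 0`. By equilibrium stresses, `G` is
`k`-independent if and only if a generic `X` with `k + 1` columns has no nonzero symmetric `K` of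
this kind, whatever its signature, so `MLT(G) ≤ d + 1` for every `G`.

For the reverse inequality one needs, when `G` is not `k`-independent, an open set of data matrices
with positive semidefinite stresses. Writing `K = N * A * Nᵀ` with `Nᵀ * X = 0`, this asks for an
open set of configurations `N` in dimension `r ≤ n - k - 1` with positive semidefinite forms `A`
for which the endpoints of every edge of `H` are conjugate. For `r = 1` dependence forces `H` to be
empty, for `r = 2` it forces any three edges of `H` to be concurrent. For `r = 3` at most five edges
remain; unless deleting a vertex leaves at most two of them, `H` is a union of paths and cycles. It
then has an orthogonal representation in `ℝ³` whose edge conditions on a quadratic form are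
independent, so that the form `A = 1` deforms along with `N`, or else `H` is a four-cycle and a
disjoint edge, where a suitable `A` of rank two is explicit.
-/

section PosSemidef

variable {m : Type*} [Fintype m]

open scoped MatrixOrder ComplexOrder in
theorem mul_eq_zero_of_conjTranspose_mul_mul_eq_zero {𝕜 l : Type*} [RCLike 𝕜] [Finite l]
    {K : Matrix m m 𝕜} (hK : K.PosSemidef) {Y : Matrix m l 𝕜} (h : Yᴴ * K * Y = 0) :
    K * Y = 0 := by
  classical
  have := Fintype.ofFinite l
  obtain ⟨C, rfl⟩ := CStarAlgebra.nonneg_iff_eq_star_mul_self.1 hK.nonneg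
  rw [star_eq_conjTranspose] at h ⊢
  have hCY : C * Y = 0 := by
    rw [← conjTranspose_mul_self_eq_zero, conjTranspose_mul, ← h]
    simp only [Matrix.mul_assoc]
  rw [Matrix.mul_assoc, hCY, Matrix.mul_zero]

theorem det_one_add_eq_prod_eigenvalues [DecidableEq m] {P : Matrix m m ℝ} (hP : P.IsHermitian) :
    (1 + P).det = ∏ i, (1 + hP.eigenvalues i) := by
  have h := congrArg (Polynomial.eval (-1)) hP.charpoly_eq
  have hscalar : scalar m (-1 : ℝ) - P = -(1 + P) := by
    rw [map_neg, map_one, neg_add']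
  have hprod : Polynomial.eval (-1) (∏ i, (Polynomial.X - Polynomial.C (hP.eigenvalues i)))
      = (-1) ^ Fintype.card m * ∏ i, (1 + hP.eigenvalues i) := by
    rw [Polynomial.eval_prod, Fintype.card, ← Finset.prod_const, ← Finset.prod_mul_distrib]
    exact Finset.prod_congr rfl fun i _ => by
      rw [Polynomial.eval_sub, Polynomial.eval_X, Polynomial.eval_C]
      ring
  rw [eval_charpoly, hscalar, det_neg] at h
  exact mul_left_cancel₀ (pow_ne_zero _ (neg_ne_zero.2 one_ne_zero)) (h.trans hprod)

theorem one_lt_det_one_add_of_posSemidef [DecidableEq m] {P : Matrix m m ℝ} (hP : P.PosSemidef)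
    (h0 : P ≠ 0) : 1 < (1 + P).det := by
  obtain ⟨i, hi⟩ : ∃ i, hP.1.eigenvalues i ≠ 0 := by
    by_contra! hall
    exact h0 (hP.1.eigenvalues_eq_zero_iff.1 (funext hall))
  calc (1 : ℝ) = ∏ _i : m, 1 := Finset.prod_const_one.symm
    _ < ∏ i, (1 + hP.1.eigenvalues i) := Finset.prod_lt_prod (fun _ _ => one_pos)
        (fun j _ => le_add_of_nonneg_right (hP.eigenvalues_nonneg j))
        ⟨i, Finset.mem_univ i, lt_add_of_pos_right 1 ((hP.eigenvalues_nonneg i).lt_of_ne' hi)⟩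
    _ = (1 + P).det := (det_one_add_eq_prod_eigenvalues hP.1).symm

open scoped MatrixOrder in
theorem det_lt_det_add_of_posDef [DecidableEq m] {A K : Matrix m m ℝ} (hA : A.PosDef)
    (hK : K.PosSemidef) (h0 : K ≠ 0) : A.det < (A + K).det := by
  obtain ⟨C, rfl⟩ := CStarAlgebra.nonneg_iff_eq_star_mul_self.1 hK.nonneg
  rw [star_eq_conjTranspose] at h0 ⊢
  have hA' : A * A⁻¹ = 1 := mul_nonsing_inv _ hA.det_pos.ne'.isUnit
  have hfactor : A + Cᴴ * C = A * (1 + A⁻¹ * Cᴴ * C) := by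
    rw [mul_add, mul_one, ← mul_assoc, ← mul_assoc, hA', one_mul]
  have hne : C * A⁻¹ * Cᴴ ≠ 0 := by
    intro hz
    have hinv : A⁻¹ * Cᴴ = 0 :=
      mul_eq_zero_of_conjTranspose_mul_mul_eq_zero hA.inv.posSemidef
        (by rwa [conjTranspose_conjTranspose])
    have hC : Cᴴ = 0 := by rw [← one_mul Cᴴ, ← hA', mul_assoc, hinv, mul_zero]
    exact h0 (by rw [hC, zero_mul])
  have hdet : 1 < (1 + C * (A⁻¹ * Cᴴ)).det := by
    rw [← mul_assoc]
    exact one_lt_det_one_add_of_posSemidef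
      (hA.inv.posSemidef.mul_mul_conjTranspose_same C) hne
  rw [hfactor, det_mul, det_one_add_mul_comm]
  exact lt_mul_of_one_lt_right hA.det_pos hdet

theorem abs_apply_le_trace_of_posSemidef {K : Matrix m m ℝ} (hK : K.PosSemidef) (i j : m) :
    |K i j| ≤ K.trace := by
  classical
  have hdiag : ∀ a, K a a ≤ K.trace := fun a =>
    Finset.single_le_sum (f := fun a => K a a) (fun b _ => hK.diag_nonneg) (Finset.mem_univ a)
  have hsymm : K j i = K i j := by simpa using hK.1.apply i j
  have hadd := hK.dotProduct_mulVec_nonneg (Pi.single i 1 + Pi.single j 1)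
  have hsub := hK.dotProduct_mulVec_nonneg (Pi.single i 1 - Pi.single j 1)
  simp only [star_trivial, mulVec_add, mulVec_sub, mulVec_single, MulOpposite.op_one, one_smul,
    dotProduct_add, add_dotProduct, dotProduct_sub, sub_dotProduct, single_dotProduct, col_apply,
    one_mul] at hadd hsub
  rw [abs_le]
  constructor <;> linarith [hdiag i, hdiag j]

theorem det_le_trace_pow_of_posSemidef [DecidableEq m] {K : Matrix m m ℝ} (hK : K.PosSemidef) :
    K.det ≤ K.trace ^ Fintype.card m := by
  have hdet : K.det = ∏ i, hK.1.eigenvalues i := hK.1.det_eq_prod_eigenvalues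
  have htrace : K.trace = ∑ i, hK.1.eigenvalues i := hK.1.trace_eq_sum_eigenvalues
  rw [hdet, htrace]
  calc ∏ i, hK.1.eigenvalues i ≤ ∏ _i : m, ∑ j, hK.1.eigenvalues j :=
        Finset.prod_le_prod (fun i _ => hK.eigenvalues_nonneg i) fun i _ =>
          Finset.single_le_sum (fun j _ => hK.eigenvalues_nonneg j) (Finset.mem_univ i)
    _ = (∑ j, hK.1.eigenvalues j) ^ Fintype.card m := by rw [Finset.prod_const, Finset.card_univ]

theorem isClosed_setOf_posSemidef {l : Type*} [Finite l] :
    IsClosed {K : Matrix l l ℝ | K.PosSemidef} := by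
  have := Fintype.ofFinite l
  have hset : {K : Matrix l l ℝ | K.PosSemidef} =
      {K | Kᴴ = K} ∩ ⋂ x : l → ℝ, {K | 0 ≤ star x ⬝ᵥ (K *ᵥ x)} := by
    ext K
    simp [posSemidef_iff_dotProduct_mulVec, IsHermitian]
  rw [hset]
  exact (isClosed_eq (by fun_prop) continuous_id).inter
    (isClosed_iInter fun x => isClosed_le continuous_const (by fun_prop))

theorem isCompact_setOf_posSemidef_trace_le (T : ℝ) :
    IsCompact {K : Matrix m m ℝ | K.PosSemidef ∧ K.trace ≤ T} := by
  have hbox : IsCompact (Set.pi Set.univ fun _ : m => Set.pi Set.univ fun _ : m =>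
      Set.Icc (-T) T) := isCompact_univ_pi fun _ => isCompact_univ_pi fun _ => isCompact_Icc
  have htrace : IsClosed {K : Matrix m m ℝ | K.trace ≤ T} :=
    isClosed_le (by fun_prop) continuous_const
  refine hbox.of_isClosed_subset (isClosed_setOf_posSemidef.inter htrace) ?_
  rintro K ⟨hK, hT⟩ i - j -
  exact abs_le.1 ((abs_apply_le_trace_of_posSemidef hK i j).trans hT)

theorem trace_mul_transpose_mul {l : Type*} [Fintype l] (K : Matrix m m ℝ) (Y : Matrix m l ℝ) :
    (Y * Yᵀ * K).trace = (Yᴴ * K * Y).trace := by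
  rw [conjTranspose_eq_transpose_of_trivial, trace_mul_comm, ← Matrix.mul_assoc, trace_mul_comm,
    ← Matrix.mul_assoc]

theorem trace_mul_transpose_mul_pos {l : Type*} [Fintype l] {K : Matrix m m ℝ}
    (hK : K.PosSemidef) {Y : Matrix m l ℝ} (h : K * Y ≠ 0) : 0 < (Y * Yᵀ * K).trace := by
  rw [trace_mul_transpose_mul]
  have hP := hK.conjTranspose_mul_mul_same Y
  exact hP.trace_nonneg.lt_of_ne' fun h0 =>
    h (mul_eq_zero_of_conjTranspose_mul_mul_eq_zero hK (hP.trace_eq_zero_iff.1 h0))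

end PosSemidef

section LinearModel

open Filter

theorem exists_pos_mul_trace_le {m : Type*} [Fintype m] {S : Matrix m m ℝ}
    {W : Submodule ℝ (Matrix m m ℝ)}
    (hS : ∀ K ∈ W, K.PosSemidef → K ≠ 0 → 0 < (S * K).trace) :
    ∃ c : ℝ, 0 < c ∧ ∀ K ∈ W, K.PosSemidef → c * K.trace ≤ (S * K).trace := by
  let C : Set (Matrix m m ℝ) := {K | K.PosSemidef ∧ K.trace ≤ 1} ∩ (W ∩ {K | K.trace = 1})
  have hC : IsCompact C := (isCompact_setOf_posSemidef_trace_le 1).inter_right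
    (W.closed_of_finiteDimensional.inter (isClosed_eq (by fun_prop) continuous_const))
  have hpos : ∀ K ∈ C, 0 < (S * K).trace := by
    rintro K ⟨⟨hK, -⟩, hKW, h1⟩
    refine hS K hKW hK ?_
    rintro rfl
    exact zero_ne_one ((trace_zero m ℝ).symm.trans h1)
  obtain ⟨c, hc, hcC⟩ : ∃ c : ℝ, 0 < c ∧ ∀ K ∈ C, c ≤ (S * K).trace := by
    rcases C.eq_empty_or_nonempty with hempty | hne
    · exact ⟨1, one_pos, by simp [hempty]⟩
    · obtain ⟨K, hK, hmin⟩ := hC.exists_isMinOn hne (f := fun K => (S * K).trace) (by fun_prop)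
      exact ⟨_, hpos K hK, fun K' hK' => hmin hK'⟩
  refine ⟨c, hc, fun K hKW hK => ?_⟩
  rcases eq_or_ne K 0 with rfl | h0
  · simp
  · have htr : 0 < K.trace := hK.trace_nonneg.lt_of_ne' fun h => h0 (hK.trace_eq_zero_iff.1 h)
    have htr1 : (K.trace⁻¹ • K).trace = 1 := by
      rw [trace_smul, smul_eq_mul, inv_mul_cancel₀ htr.ne']
    have hle := hcC (K.trace⁻¹ • K)
      ⟨⟨hK.smul (inv_nonneg.2 htr.le), htr1.le⟩, W.smul_mem _ hKW, htr1⟩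
    rwa [mul_smul_comm, trace_smul, smul_eq_mul, inv_mul_eq_div, le_div_iff₀ htr] at hle

theorem exists_pos_forall_lt_mul_sub_log {c : ℝ} (hc : 0 < c) (a b : ℝ) :
    ∃ T : ℝ, ∀ t, T < t → b < c * t - a * Real.log t := by
  have hlo : (fun t : ℝ => a * Real.log t) =o[atTop] fun t : ℝ => c * t :=
    (Real.isLittleO_log_id_atTop.const_mul_left a).trans_isTheta
      ((Asymptotics.isTheta_refl _ _).const_mul_right hc.ne')
  have htop : Tendsto (fun t : ℝ => c * t - a * Real.log t) atTop atTop :=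
    ((Asymptotics.IsEquivalent.refl (u := fun t : ℝ => c * t)).sub_isLittleO hlo).symm.tendsto_atTop
      (tendsto_id.const_mul_atTop hc)
  obtain ⟨T, hT⟩ := (htop.eventually_gt_atTop b).exists_forall_of_atTop
  exact ⟨T, fun t ht => hT t ht.le⟩

variable {n : ℕ} {S : Matrix (Fin n) (Fin n) ℝ} {W : Submodule ℝ (Matrix (Fin n) (Fin n) ℝ)}

theorem exists_isCompact_mlObjective_sublevel
    (hS : ∀ K ∈ W, K.PosSemidef → K ≠ 0 → 0 < (S * K).trace) (b : ℝ) :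
    ∃ Q : Set (Matrix (Fin n) (Fin n) ℝ), IsCompact Q ∧ Q ⊆ {K | K ∈ W ∧ K.PosDef} ∧
      ∀ K ∈ W, K.PosDef → mlObjective S K ≤ b → K ∈ Q := by
  obtain ⟨c, hc, hcK⟩ := exists_pos_mul_trace_le hS
  obtain ⟨T, hT⟩ := exists_pos_forall_lt_mul_sub_log hc n b
  refine ⟨{K | K.PosSemidef ∧ K.trace ≤ T} ∩ (W ∩ {K | Real.exp (-b) ≤ K.det}),
    (isCompact_setOf_posSemidef_trace_le T).inter_right
      (W.closed_of_finiteDimensional.inter (isClosed_le continuous_const (by fun_prop))), ?_, ?_⟩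
  · rintro K ⟨⟨hK, -⟩, hKW, hdet⟩
    exact ⟨hKW, hK.posDef_iff_det_ne_zero.2 ((Real.exp_pos _).trans_le hdet).ne'⟩
  · intro K hKW hK hle
    have hlog : Real.log K.det ≤ n * Real.log K.trace := by
      have hdet := det_le_trace_pow_of_posSemidef hK.posSemidef
      rw [Fintype.card_fin] at hdet
      exact (Real.log_le_log hK.det_pos hdet).trans_eq (Real.log_pow _ _)
    have hcoercive := hcK K hKW hK.posSemidef
    rw [mlObjective] at hle
    refine ⟨⟨hK.posSemidef, not_lt.1 fun hlt => ?_⟩, hKW, ?_⟩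
    · linarith [hT _ hlt]
    · have htr : 0 ≤ (S * K).trace :=
        (mul_nonneg hc.le hK.posSemidef.trace_nonneg).trans hcoercive
      rw [Set.mem_ofPred_eq, ← Real.le_log_iff_exp_le hK.det_pos]
      linarith

theorem exists_isMinOn_mlObjective (hW : ∃ K ∈ W, K.PosDef)
    (hS : ∀ K ∈ W, K.PosSemidef → K ≠ 0 → 0 < (S * K).trace) :
    ∃ K ∈ {K | K ∈ W ∧ K.PosDef}, IsMinOn (mlObjective S) {K | K ∈ W ∧ K.PosDef} K := by
  obtain ⟨A, hAW, hA⟩ := hW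
  obtain ⟨Q, hQ, hQsub, hQmem⟩ := exists_isCompact_mlObjective_sublevel hS (mlObjective S A)
  have hcont : ContinuousOn (mlObjective S) Q := by
    have htr : Continuous fun K : Matrix (Fin n) (Fin n) ℝ => (S * K).trace := by fun_prop
    exact htr.continuousOn.sub
      (ContinuousOn.log (by fun_prop) fun K hK => (hQsub hK).2.det_pos.ne')
  have hAQ := hQmem A hAW hA le_rfl
  obtain ⟨K, hK, hmin⟩ := hQ.exists_isMinOn ⟨A, hAQ⟩ hcont
  refine ⟨K, hQsub hK, fun K' hK' => ?_⟩
  rcases le_total (mlObjective S K') (mlObjective S A) with hle | hle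
  · exact hmin (hQmem K' hK'.1 hK'.2 hle)
  · exact (hmin hAQ).trans hle

theorem mlObjective_add_lt {A K : Matrix (Fin n) (Fin n) ℝ} (hA : A.PosDef) (hK : K.PosSemidef)
    (h0 : K ≠ 0) (htr : (S * K).trace = 0) : mlObjective S (A + K) < mlObjective S A := by
  rw [mlObjective, mlObjective, mul_add, trace_add, htr, add_zero]
  exact sub_lt_sub_left (Real.log_lt_log hA.det_pos (det_lt_det_add_of_posDef hA hK h0)) _

end LinearModel

section Stress

variable {V : Type*}

/-- The symmetric matrices that vanish on the edges of `H`. The Gaussian graphical model of `G`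
consists of the positive definite elements of the vanishing space of the complement of `G`. -/
def vanishingSpace (H : SimpleGraph V) : Submodule ℝ (Matrix V V ℝ) where
  carrier := {K | Kᵀ = K ∧ ∀ i j, H.Adj i j → K i j = 0}
  add_mem' hA hB :=
    ⟨by rw [transpose_add, hA.1, hB.1], fun i j h => by simp [hA.2 i j h, hB.2 i j h]⟩
  zero_mem' := ⟨transpose_zero, fun _ _ _ => rfl⟩
  smul_mem' c A hA := ⟨by rw [transpose_smul, hA.1], fun i j h => by simp [hA.2 i j h]⟩

/-- A positive semidefinite stress of the data matrix `X`: a nonzero positive semidefinite matrix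
that annihilates `X` and vanishes on the edges of `H`. -/
def IsPSDStress [Fintype V] {κ : Type*} (H : SimpleGraph V) (X : Matrix V κ ℝ)
    (K : Matrix V V ℝ) : Prop :=
  K.PosSemidef ∧ K ≠ 0 ∧ K ∈ vanishingSpace H ∧ K * X = 0

variable {n d : ℕ} {G : SimpleGraph (Fin n)}

theorem graphModel_eq_setOf_posDef (G : SimpleGraph (Fin n)) :
    graphModel n G = {K | K ∈ vanishingSpace Gᶜ ∧ K.PosDef} := by
  ext K
  constructor
  · exact fun h => ⟨⟨h.1.1, fun i j hij => h.2 i j hij.ne ((G.compl_adj i j).1 hij).2⟩, h.1⟩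
  · exact fun h => ⟨h.2, fun i j hij hG => h.1.2 i j ((G.compl_adj i j).2 ⟨hij, hG⟩)⟩

theorem exists_isMinOn_graphModel_iff (X : Matrix (Fin n) (Fin d) ℝ) :
    (∃ K ∈ graphModel n G, IsMinOn (mlObjective (X * Xᵀ)) (graphModel n G) K) ↔
      ∀ K, ¬ IsPSDStress Gᶜ X K := by
  rw [graphModel_eq_setOf_posDef]
  constructor
  · rintro ⟨A, ⟨hAG, hA⟩, hmin⟩ K ⟨hK, hK0, hKG, hKX⟩
    have htr : (X * Xᵀ * K).trace = 0 := by
      rw [trace_mul_comm, ← Matrix.mul_assoc, hKX, Matrix.zero_mul, trace_zero]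
    exact (mlObjective_add_lt hA hK hK0 htr).not_ge
      (hmin ⟨add_mem hAG hKG, hA.add_posSemidef hK⟩)
  · intro h
    refine exists_isMinOn_mlObjective ⟨1, ⟨transpose_one, ?_⟩, PosDef.one⟩ fun K hKG hK hK0 => ?_
    · exact fun i j hij => one_apply_ne hij.ne
    · exact trace_mul_transpose_mul_pos hK fun hKX => h K ⟨hK, hK0, hKG, hKX⟩

end Stress

section Generic

open Filter

theorem ae_det_add_smul_ne_zero {ι : Type*} [Fintype ι] [DecidableEq ι] {A : Matrix ι ι ℝ}
    (hA : A.det ≠ 0) (B : Matrix ι ι ℝ) : ∀ᵐ t : ℝ, (A + t • B).det ≠ 0 := by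
  let q : Polynomial ℝ :=
    (A.map Polynomial.C + (Polynomial.X : Polynomial ℝ) • B.map Polynomial.C).det
  have hq : ∀ t, q.eval t = (A + t • B).det := by
    intro t
    rw [← Polynomial.coe_evalRingHom, RingHom.map_det]
    congr 1
    ext i j
    simp [mul_comm t]
  have hq0 : q ≠ 0 := by
    intro h0
    refine hA ?_
    rw [← add_zero A, ← zero_smul ℝ B, ← hq, h0, Polynomial.eval_zero]
  filter_upwards [(Polynomial.finite_setOfPred_isRoot hq0).countable.ae_notMem volume] with t ht
  rwa [← hq]

variable {E : Type*} [NormedAddCommGroup E] [NormedSpace ℝ E] [FiniteDimensional ℝ E]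
  [MeasurableSpace E] [BorelSpace E] (μ : Measure E) [μ.IsAddHaarMeasure]

/- Almost every line through `x₀` meets the zero set of the determinant in a null set; by Fubini the
zero set is null after rescaling about `x₀` by almost every factor, hence null. -/
theorem ae_det_ne_zero {ι : Type*} [Fintype ι] [DecidableEq ι] (M : E →ₗ[ℝ] Matrix ι ι ℝ)
    {x₀ : E} (h : (M x₀).det ≠ 0) : ∀ᵐ x ∂μ, (M x).det ≠ 0 := by
  have hcont : Continuous fun x => (M x).det :=
    (LinearMap.continuous_of_finiteDimensional M).matrix_det
  have hline : ∀ x, ∀ᵐ t : ℝ, (M (x₀ + t • x)).det ≠ 0 := fun x => by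
    simpa only [map_add, map_smul] using ae_det_add_smul_ne_zero h (M x)
  have hmeas : MeasurableSet {z : E × ℝ | (M (x₀ + z.2 • z.1)).det ≠ 0} :=
    (isOpen_ne_fun (hcont.comp (by fun_prop)) continuous_const).measurableSet
  have hscaled : ∀ᵐ t : ℝ, ∀ᵐ x ∂μ, (M (x₀ + t • x)).det ≠ 0 :=
    (Measure.ae_ae_comm hmeas).1 (Eventually.of_forall hline)
  obtain ⟨t, ht, ht0⟩ := (hscaled.and (Measure.ae_ne volume (0 : ℝ))).exists
  have hq : Measure.QuasiMeasurePreserving (fun y : E => t⁻¹ • (-x₀ + y)) μ μ :=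
    (Measure.quasiMeasurePreserving_smul μ (inv_ne_zero ht0)).comp
      (measurePreserving_add_left μ (-x₀)).quasiMeasurePreserving
  filter_upwards [hq.ae ht] with y hy
  rwa [smul_inv_smul₀ ht0, add_neg_cancel_left] at hy

theorem ae_injective_of_injective {P W : Type*} [AddCommGroup P] [Module ℝ P]
    [FiniteDimensional ℝ P] [AddCommGroup W] [Module ℝ W] (L : E →ₗ[ℝ] P →ₗ[ℝ] W) {x₀ : E}
    (h : Function.Injective (L x₀)) : ∀ᵐ x ∂μ, Function.Injective (L x) := by
  obtain ⟨g, hg⟩ := (L x₀).exists_leftInverse_of_injective (LinearMap.ker_eq_bot.2 h)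
  let b := Module.finBasis ℝ P
  let M : E →ₗ[ℝ] Matrix _ _ ℝ :=
    (LinearMap.toMatrix b b).toLinearMap ∘ₗ LinearMap.llcomp ℝ P W P g ∘ₗ L
  have hM : ∀ x, (M x).det = LinearMap.det (g ∘ₗ L x) := fun x => LinearMap.det_toMatrix b _
  have hM₀ : (M x₀).det ≠ 0 := by
    rw [hM, hg, LinearMap.det_id]
    exact one_ne_zero
  filter_upwards [ae_det_ne_zero μ M hM₀] with x hx
  rw [hM] at hx
  exact Function.Injective.of_comp (f := g) (LinearMap.equivOfDetNeZero _ hx).injective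

variable {V κ : Type*} [Fintype V] [Fintype κ]

instance isAddHaarMeasure_volume_pi_pi : (volume : Measure (V → κ → ℝ)).IsAddHaarMeasure :=
  haveI := isAddHaarMeasure_volume_pi κ
  Measure.pi.isAddHaarMeasure fun _ : V => (volume : Measure (κ → ℝ))

theorem ae_forall_mem_eq_zero_of_mul_eq_zero {U : Submodule ℝ (Matrix V V ℝ)} {X₀ : Matrix V κ ℝ}
    (h : ∀ K ∈ U, K * X₀ = 0 → K = 0) :
    ∀ᵐ X : V → κ → ℝ, ∀ K ∈ U, K * of X = 0 → K = 0 := by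
  let L : (V → κ → ℝ) →ₗ[ℝ] U →ₗ[ℝ] Matrix V κ ℝ :=
    LinearMap.mk₂ ℝ (fun X K => K.1 * of X) (fun X Y K => Matrix.mul_add _ _ _)
      (fun c X K => Matrix.mul_smul K.1 c (of X)) (fun X K K' => Matrix.add_mul _ _ _)
      (fun c X K => Matrix.smul_mul _ _ _)
  have hL : ∀ X, Function.Injective (L X) ↔ ∀ K ∈ U, K * of X = 0 → K = 0 := fun X => by
    rw [injective_iff_map_eq_zero]
    exact ⟨fun hX K hK h0 => congrArg Subtype.val (hX ⟨K, hK⟩ h0),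
      fun hX K h0 => Subtype.ext (hX K K.2 h0)⟩
  filter_upwards [ae_injective_of_injective volume L ((hL X₀).2 h)] with X hX
  exact (hL X).1 hX

end Generic

section Rigidity

variable {n d : ℕ} {G : SimpleGraph (Fin n)}

/-- The Laplacian of the edge `ij`, the rank-one matrix `(eᵢ - eⱼ)(eᵢ - eⱼ)ᵀ`. -/
def edgeLaplacian (i j : Fin n) : Matrix (Fin n) (Fin n) ℝ :=
  vecMulVec (Pi.single i 1 - Pi.single j 1) (Pi.single i 1 - Pi.single j 1)

/-- The edges of `G`, each listed once as `(i, j)` with `i < j`. -/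
abbrev OrderedEdge (G : SimpleGraph (Fin n)) : Type :=
  {e : Fin n × Fin n // G.Adj e.1 e.2 ∧ e.1 < e.2}

/-- The Laplacian of `G` with edge weights `ω`, whose off-diagonal entries are `-ω`. -/
def weightedLaplacian [DecidableRel G.Adj] (ω : OrderedEdge G → ℝ) :
    Matrix (Fin n) (Fin n) ℝ :=
  ∑ e, ω e • edgeLaplacian e.1.1 e.1.2

/-- The equilibrium stress matrices of `G`: symmetric matrices supported on the edges of `G` and the
diagonal whose rows sum to zero. -/
def stressMatrixSpace (G : SimpleGraph (Fin n)) : Submodule ℝ (Matrix (Fin n) (Fin n) ℝ) where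
  carrier := {K | K ∈ vanishingSpace Gᶜ ∧ K *ᵥ 1 = 0}
  add_mem' hA hB := ⟨add_mem hA.1 hB.1, by rw [add_mulVec, hA.2, hB.2, add_zero]⟩
  zero_mem' := ⟨zero_mem _, zero_mulVec 1⟩
  smul_mem' c A hA := ⟨Submodule.smul_mem _ c hA.1, by rw [smul_mulVec, hA.2, smul_zero]⟩

theorem edgeLaplacian_mul (p : Fin n → Fin d → ℝ) (i j : Fin n) :
    edgeLaplacian i j * of p = of (rigidityVec p i j) := by
  ext a l
  have hrow : ((Pi.single i 1 - Pi.single j 1 : Fin n → ℝ) ᵥ* of p) l = p i l - p j l := by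
    simp [sub_vecMul]
  rw [edgeLaplacian, vecMulVec_mul, vecMulVec_apply, hrow, of_apply, rigidityVec]
  rcases eq_or_ne a i with rfl | hi <;> rcases eq_or_ne a j with rfl | hj <;> simp [*]

theorem edgeLaplacian_mulVec_one (i j : Fin n) : edgeLaplacian i j *ᵥ 1 = 0 := by
  simp [edgeLaplacian, vecMulVec_mulVec, sub_dotProduct]

theorem edgeLaplacian_apply_eq_zero {i j a b : Fin n} (hab : a ≠ b) (h : s(a, b) ≠ s(i, j)) :
    edgeLaplacian i j a b = 0 := by
  rw [edgeLaplacian, vecMulVec_apply]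
  simp only [Pi.sub_apply, Pi.single_apply]
  grind

theorem eq_zero_of_mem_stressMatrixSpace {K : Matrix (Fin n) (Fin n) ℝ}
    (hK : K ∈ stressMatrixSpace G) (h : ∀ e : OrderedEdge G, K e.1.1 e.1.2 = 0) : K = 0 := by
  have hoff : ∀ i j, i ≠ j → K i j = 0 := by
    intro i j hij
    by_cases hG : G.Adj i j
    · rcases hij.lt_or_gt with hlt | hlt
      · exact h ⟨(i, j), hG, hlt⟩
      · rw [← hK.1.1, transpose_apply]
        exact h ⟨(j, i), hG.symm, hlt⟩
    · exact hK.1.2 i j ((G.compl_adj i j).2 ⟨hij, hG⟩)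
  ext i j
  rcases eq_or_ne i j with rfl | hij
  · have hrow : ∑ j, K i j = 0 := by simpa [mulVec, dotProduct] using congrFun hK.2 i
    rwa [Finset.sum_eq_single i (fun j _ hji => hoff i j hji.symm) (by simp)] at hrow
  · exact hoff i j hij

section Weighted

variable [DecidableRel G.Adj]

theorem weightedLaplacian_mul (ω : OrderedEdge G → ℝ) (p : Fin n → Fin d → ℝ) :
    weightedLaplacian ω * of p = of (∑ e, ω e • rigidityVec p e.1.1 e.1.2) := by
  simp only [weightedLaplacian, Matrix.sum_mul, Matrix.smul_mul, edgeLaplacian_mul]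
  rfl

theorem weightedLaplacian_mem (ω : OrderedEdge G → ℝ) :
    weightedLaplacian ω ∈ stressMatrixSpace G := by
  refine sum_mem fun e _ => Submodule.smul_mem (stressMatrixSpace G) _
    ⟨⟨transpose_vecMulVec _ _, fun i j hij => ?_⟩, edgeLaplacian_mulVec_one _ _⟩
  refine edgeLaplacian_apply_eq_zero hij.ne fun h => ((G.compl_adj i j).1 hij).2 ?_
  rw [← SimpleGraph.mem_edgeSet, h]
  exact e.2.1

theorem weightedLaplacian_apply (ω : OrderedEdge G → ℝ) (e : OrderedEdge G) :
    weightedLaplacian ω e.1.1 e.1.2 = -ω e := by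
  rw [weightedLaplacian, Matrix.sum_apply, Finset.sum_eq_single e]
  · simp [edgeLaplacian, vecMulVec_apply, e.2.2.ne, e.2.2.ne']
  · intro f _ hfe
    rw [Matrix.smul_apply, edgeLaplacian_apply_eq_zero e.2.2.ne, smul_zero]
    intro h
    refine hfe (Subtype.ext ?_)
    rcases Sym2.eq_iff.1 h with ⟨h1, h2⟩ | ⟨h1, h2⟩
    · exact (Prod.ext h1 h2).symm
    · exact absurd (h1 ▸ h2 ▸ e.2.2) f.2.2.not_gt
  · exact fun h => absurd (Finset.mem_univ e) h

theorem eq_weightedLaplacian_of_mem {K : Matrix (Fin n) (Fin n) ℝ}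
    (hK : K ∈ stressMatrixSpace G) :
    K = weightedLaplacian fun e : OrderedEdge G => -K e.1.1 e.1.2 := by
  refine sub_eq_zero.1 (eq_zero_of_mem_stressMatrixSpace
    (sub_mem hK (weightedLaplacian_mem _)) fun e => ?_)
  rw [Matrix.sub_apply, weightedLaplacian_apply, neg_neg, sub_self]

end Weighted

theorem linearIndependent_rigidityVec_iff {p : Fin n → Fin d → ℝ} :
    (LinearIndependent ℝ fun e : OrderedEdge G =>
      rigidityVec p e.1.1 e.1.2) ↔ ∀ K ∈ stressMatrixSpace G, K * of p = 0 → K = 0 := by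
  classical
  rw [Fintype.linearIndependent_iff]
  constructor
  · intro h K hK hKp
    have hsum := h (fun e => -K e.1.1 e.1.2) (by
      rw [← of.apply_eq_iff_eq, ← weightedLaplacian_mul, ← eq_weightedLaplacian_of_mem hK, hKp]
      rfl)
    rw [eq_weightedLaplacian_of_mem hK, funext hsum]
    simp [weightedLaplacian]
  · intro h ω hω e
    have hzero := h _ (weightedLaplacian_mem ω) (by rw [weightedLaplacian_mul, hω]; rfl)
    rw [← neg_eq_zero, ← weightedLaplacian_apply, hzero, Matrix.zero_apply]

theorem isIndepGraph_iff_exists_config :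
    IsIndepGraph d G ↔
      ∃ p : Fin n → Fin d → ℝ, ∀ K ∈ stressMatrixSpace G, K * of p = 0 → K = 0 := by
  simp only [IsIndepGraph, linearIndependent_rigidityVec_iff]
  exact ⟨Filter.Eventually.exists, fun ⟨_, hp⟩ => ae_forall_mem_eq_zero_of_mul_eq_zero hp⟩

theorem exists_forall_ne_zero_of_mul_eq_zero {k : ℕ}
    {U : Submodule ℝ (Matrix (Fin n) (Fin n) ℝ)}
    {X₀ : Matrix (Fin n) (Fin (k + 1)) ℝ} (h : ∀ K ∈ U, K * X₀ = 0 → K = 0) :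
    ∃ X : Matrix (Fin n) (Fin (k + 1)) ℝ, (∀ i, X i 0 ≠ 0) ∧ ∀ K ∈ U, K * X = 0 → K = 0 := by
  let M : (Fin n → Fin (k + 1) → ℝ) →ₗ[ℝ] Matrix (Fin n) (Fin n) ℝ :=
    diagonalLinearMap (Fin n) ℝ ℝ ∘ₗ LinearMap.pi fun i => LinearMap.proj 0 ∘ₗ LinearMap.proj i
  have hM : ∀ X, (M X).det = ∏ i, X i 0 := fun X => det_diagonal
  have hne : ∀ᵐ X, (M X).det ≠ 0 := ae_det_ne_zero volume M (x₀ := 1) (by simp [hM])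
  obtain ⟨X, hX, hXU⟩ := (hne.and (ae_forall_mem_eq_zero_of_mul_eq_zero h)).exists
  rw [hM, Finset.prod_ne_zero_iff] at hX
  exact ⟨of X, fun i => hX i (Finset.mem_univ i), hXU⟩

theorem isIndepGraph_iff_exists_data {k : ℕ} :
    IsIndepGraph k G ↔ ∃ X : Matrix (Fin n) (Fin (k + 1)) ℝ,
      ∀ K ∈ vanishingSpace Gᶜ, K * X = 0 → K = 0 := by
  rw [isIndepGraph_iff_exists_config]
  constructor
  · rintro ⟨p, hp⟩
    refine ⟨of fun i => Fin.cons 1 (p i), fun K hK hKX => hp K ⟨hK, ?_⟩ ?_⟩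
    · ext i
      simpa [mul_apply, mulVec, dotProduct] using congrFun (congrFun hKX i) 0
    · ext i l
      simpa [mul_apply] using congrFun (congrFun hKX i) l.succ
  · rintro ⟨X₀, hX₀⟩
    obtain ⟨X, hX0, hX⟩ := exists_forall_ne_zero_of_mul_eq_zero hX₀
    refine ⟨fun i l => X i l.succ / X i 0, fun K ⟨hK, hK1⟩ hKp => ?_⟩
    let D : Matrix (Fin n) (Fin n) ℝ := diagonal fun i => (X i 0)⁻¹
    have hDKD : D * K * D = 0 := by
      refine hX _ ⟨?_, fun i j hij => ?_⟩ ?_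
      · simp only [D, transpose_mul, diagonal_transpose, hK.1, Matrix.mul_assoc]
      · simp [D, hK.2 i j hij]
      · have hDX : K * (D * X) = 0 := by
          have hentry : ∀ i l, (D * X) i l = X i l / X i 0 := fun i l =>
            (diagonal_mul _ _ _ _).trans (inv_mul_eq_div _ _)
          ext i l
          rw [mul_apply]
          simp only [hentry]
          refine Fin.cases ?_ (fun l => ?_) l
          · simpa [mulVec, dotProduct, hX0] using congrFun hK1 i
          · simpa [mul_apply] using congrFun (congrFun hKp i) l
        rw [Matrix.mul_assoc, Matrix.mul_assoc, hDX, Matrix.mul_zero]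
    ext i j
    simpa [D, hX0] using congrFun (congrFun hDKD i) j

end Rigidity

section Gale

variable {V : Type*} {H : SimpleGraph V} {k r : ℕ}

/-- No nonzero symmetric bilinear form makes the rows of `N` at the endpoints of every edge of `H`
conjugate. Such an `N` certifies that generic data annihilated by `Nᵀ` carry no stress. -/
def NoConjugateForm (H : SimpleGraph V) (N : Matrix V (Fin r) ℝ) : Prop :=
  ∀ A : Matrix (Fin r) (Fin r) ℝ, Aᵀ = A → (∀ i j, H.Adj i j → N i ⬝ᵥ A *ᵥ N j = 0) → A = 0

theorem mul_mul_transpose_apply {l : Type*} [Fintype l] (N : Matrix V l ℝ) (A : Matrix l l ℝ)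
    (i j : V) : (N * A * Nᵀ) i j = N i ⬝ᵥ A *ᵥ N j := by
  rw [Matrix.mul_assoc]
  rfl

theorem NoConjugateForm.injective_mulVec {N : Matrix V (Fin r) ℝ} (hN : NoConjugateForm H N) :
    Function.Injective N.mulVec := by
  refine (injective_iff_map_eq_zero N.mulVecLin).2 fun w hw => ?_
  have hw0 : vecMulVec w w = 0 := hN _ (transpose_vecMulVec w w) fun i j _ => by
    have hi : N i ⬝ᵥ w = 0 := congrFun hw i
    rw [vecMulVec_mulVec, dotProduct_smul, hi, smul_zero]
  ext a
  simpa [vecMulVec_apply] using congrFun (congrFun hw0 a) a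

variable [Fintype V]

theorem exists_mul_eq_one_of_injective_mulVec {N : Matrix V (Fin r) ℝ}
    (hN : Function.Injective N.mulVec) : ∃ M : Matrix (Fin r) V ℝ, M * N = 1 := by
  have hdet := (PosDef.conjTranspose_mul_self N hN).det_pos.ne'
  exact ⟨(Nᴴ * N)⁻¹ * Nᴴ, by rw [Matrix.mul_assoc, nonsing_inv_mul _ hdet.isUnit]⟩

theorem exists_matrix_forall_mulVec_eq_zero {U : Submodule ℝ (V → ℝ)}
    (hU : Module.finrank ℝ U ≤ k) :
    ∃ X : Matrix V (Fin k) ℝ, ∀ K : Matrix V V ℝ, K * X = 0 → ∀ u ∈ U, K *ᵥ u = 0 := by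
  let b := Module.finBasis ℝ U
  refine ⟨of fun i l => if h : l.1 < Module.finrank ℝ U then (b ⟨l, h⟩ : V → ℝ) i else 0,
    fun K hK u hu => ?_⟩
  have hb : ∀ l, K *ᵥ (b l : V → ℝ) = 0 := by
    intro l
    ext i
    simpa [mul_apply, mulVec, dotProduct] using congrFun (congrFun hK i) ⟨l, l.2.trans_le hU⟩
  have hsum : u = ∑ l, b.repr ⟨u, hu⟩ l • (b l : V → ℝ) := by
    simpa only [Submodule.coe_sum, Submodule.coe_smul] using
      (congrArg Subtype.val (b.sum_repr ⟨u, hu⟩)).symm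
  rw [hsum, mulVec_sum]
  exact Finset.sum_eq_zero fun l _ => by rw [mulVec_smul, hb, smul_zero]

theorem finrank_ker_transpose_of_mul_eq_one {M : Matrix (Fin r) V ℝ} {N : Matrix V (Fin r) ℝ}
    (hMN : M * N = 1) :
    r + Module.finrank ℝ (LinearMap.ker Nᵀ.mulVecLin) = Fintype.card V := by
  have hsurj : Function.Surjective Nᵀ.mulVecLin := fun w =>
    ⟨Mᵀ *ᵥ w, by
      rw [mulVecLin_apply, mulVec_mulVec, ← transpose_mul, hMN, transpose_one, one_mulVec]⟩
  have hrank := Nᵀ.mulVecLin.finrank_range_add_finrank_ker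
  rwa [LinearMap.range_eq_top.2 hsurj, finrank_top, Module.finrank_fin_fun,
    Module.finrank_fintype_fun_eq_card] at hrank

/- Let `X` span the kernel of `Nᵀ`. A symmetric `K` with `K * X = 0` factors through `Nᵀ` on both
sides, `K = N * A * Nᵀ`, and its vanishing on the edges of `H` makes them conjugate for `A`. -/
theorem NoConjugateForm.exists_data {N : Matrix V (Fin r) ℝ} (hN : NoConjugateForm H N)
    (hk : Fintype.card V ≤ k + r) :
    ∃ X : Matrix V (Fin k) ℝ, ∀ K ∈ vanishingSpace H, K * X = 0 → K = 0 := by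
  classical
  obtain ⟨M, hMN⟩ := exists_mul_eq_one_of_injective_mulVec hN.injective_mulVec
  have hfin := finrank_ker_transpose_of_mul_eq_one hMN
  obtain ⟨X, hX⟩ := exists_matrix_forall_mulVec_eq_zero (k := k)
    (U := LinearMap.ker Nᵀ.mulVecLin) (by omega)
  refine ⟨X, fun K hK hKX => ?_⟩
  have hright : K = K * (Mᵀ * Nᵀ) := by
    refine ext_of_mulVec_single fun i => ?_
    have hker : Pi.single i 1 - (Mᵀ * Nᵀ) *ᵥ Pi.single i 1 ∈ LinearMap.ker Nᵀ.mulVecLin := by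
      rw [LinearMap.mem_ker, mulVecLin_apply, mulVec_sub, mulVec_mulVec, ← Matrix.mul_assoc,
        ← transpose_mul, hMN, transpose_one, Matrix.one_mul, sub_self]
    rw [← mulVec_mulVec, ← sub_eq_zero, ← mulVec_sub]
    exact hX K hKX _ hker
  have hleft : K = N * M * K := by
    simpa only [transpose_mul, transpose_transpose, hK.1] using congrArg transpose hright
  have hfactor : K = N * (M * K * Mᵀ) * Nᵀ := by
    rw [← Matrix.mul_assoc, ← Matrix.mul_assoc, ← hleft, Matrix.mul_assoc, ← hright]
  have hA : M * K * Mᵀ = 0 := by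
    refine hN _ ?_ fun i j hij => ?_
    · simp only [transpose_mul, transpose_transpose, hK.1, Matrix.mul_assoc]
    · rw [← mul_mul_transpose_apply, ← hfactor, hK.2 i j hij]
  rw [hfactor, hA, Matrix.mul_zero, Matrix.zero_mul]

end Gale

theorem NoConjugateForm.isIndepGraph {n k r : ℕ} {G : SimpleGraph (Fin n)}
    {N : Matrix (Fin n) (Fin r) ℝ} (hN : NoConjugateForm Gᶜ N) (hk : n ≤ k + 1 + r) :
    IsIndepGraph k G :=
  isIndepGraph_iff_exists_data.2 (hN.exists_data (by rwa [Fintype.card_fin]))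

section Certificates

variable {V : Type*} {H : SimpleGraph V}

theorem noConjugateForm_zero (N : Matrix V (Fin 0) ℝ) : NoConjugateForm H N :=
  fun _ _ _ => Subsingleton.elim _ _

theorem noConjugateForm_one_of_ne_bot (h : H ≠ ⊥) :
    NoConjugateForm H (of fun _ _ => 1 : Matrix V (Fin 1) ℝ) := by
  obtain ⟨i, j, hij⟩ := SimpleGraph.ne_bot_iff_exists_adj.1 h
  intro A _ hA
  ext a b
  have hij' := hA i j hij
  fin_cases a; fin_cases b
  simpa [dotProduct, mulVec] using hij'

open scoped Classical in
theorem exists_noConjugateForm_two_of_triangle {a b c : V} (hab : H.Adj a b) (hbc : H.Adj b c)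
    (hac : H.Adj a c) : ∃ N : Matrix V (Fin 2) ℝ, NoConjugateForm H N := by
  refine ⟨of fun i => if i = a then ![1, 0] else if i = b then ![0, 1] else ![1, 1],
    fun A hAT hA => ?_⟩
  have h01 : A 0 1 = 0 := by simpa [dotProduct, hab.ne'] using hA a b hab
  have h10 : A 1 0 = 0 := by rw [← hAT, transpose_apply, h01]
  have h11 : A 1 1 = 0 := by
    simpa [dotProduct, mulVec, hab.ne', hac.ne', hbc.ne', h10] using hA b c hbc
  have h00 : A 0 0 = 0 := by
    simpa [dotProduct, mulVec, hac.ne', hbc.ne', h01] using hA a c hac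
  ext i j
  fin_cases i <;> fin_cases j <;> assumption

open scoped Classical in
theorem exists_noConjugateForm_two_of_cut {S : Set V} {x y : Sym2 V} {e f : V}
    (hx : x ∈ H.edgeSet) (hxS : ∀ v ∈ x, v ∈ S) (hy : y ∈ H.edgeSet) (hyS : ∀ v ∈ y, v ∉ S)
    (hef : H.Adj e f) (he : e ∈ S) (hf : f ∉ S) :
    ∃ N : Matrix V (Fin 2) ℝ, NoConjugateForm H N := by
  induction x with | _ a b
  induction y with | _ c d
  rw [Sym2.ball] at hxS hyS
  refine ⟨of fun i => if i ∈ S then ![1, 0] else ![0, 1], fun A hAT hA => ?_⟩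
  have h00 : A 0 0 = 0 := by simpa [dotProduct, hxS] using hA a b hx
  have h11 : A 1 1 = 0 := by simpa [dotProduct, hyS] using hA c d hy
  have h01 : A 0 1 = 0 := by simpa [dotProduct, he, hf] using hA e f hef
  have h10 : A 1 0 = 0 := by rw [← hAT, transpose_apply, h01]
  ext i j
  fin_cases i <;> fin_cases j <;> assumption

theorem exists_noConjugateForm_two_of_disjoint_of_mem {x y : Sym2 V} {e f : V}
    (hx : x ∈ H.edgeSet) (hy : y ∈ H.edgeSet) (hxy : ∀ v ∈ x, v ∉ y) (hef : H.Adj e f)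
    (he : e ∈ x) (hne : s(e, f) ≠ x) : ∃ N : Matrix V (Fin 2) ℝ, NoConjugateForm H N :=
  exists_noConjugateForm_two_of_cut (S := {v | v ∈ x}) hx (fun _ hv => hv) hy
    (fun v hv hvx => hxy v hvx hv) hef he
    fun hf => hne ((Sym2.mem_and_mem_iff hef.ne).1 ⟨he, hf⟩).symm

theorem exists_noConjugateForm_two_of_disjoint {x y z : Sym2 V} (hx : x ∈ H.edgeSet)
    (hy : y ∈ H.edgeSet) (hz : z ∈ H.edgeSet) (hxy : ∀ v ∈ x, v ∉ y) (hxz : x ≠ z) (hyz : y ≠ z) :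
    ∃ N : Matrix V (Fin 2) ℝ, NoConjugateForm H N := by
  induction z with | _ e f
  have hyx : ∀ v ∈ y, v ∉ x := fun v hvy hvx => hxy v hvx hvy
  by_cases hex : e ∈ x
  · exact exists_noConjugateForm_two_of_disjoint_of_mem hx hy hxy hz hex hxz.symm
  by_cases hfx : f ∈ x
  · exact exists_noConjugateForm_two_of_disjoint_of_mem hx hy hxy (H.adj_symm hz) hfx
      (Sym2.eq_swap.trans_ne hxz.symm)
  by_cases hey : e ∈ y
  · exact exists_noConjugateForm_two_of_disjoint_of_mem hy hx hyx hz hey hyz.symm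
  · refine exists_noConjugateForm_two_of_cut (S := {v | v ∈ x ∨ v = e}) hx (fun _ => Or.inl) hy ?_
      hz (Or.inr rfl) (not_or.2 ⟨hfx, (H.ne_of_adj hz).symm⟩)
    rintro v hv (hvx | rfl)
    exacts [hyx v hv hvx, hey hv]

/-- Any three distinct edges of `H` have a common vertex. -/
def EdgeTriplesConcurrent (H : SimpleGraph V) : Prop :=
  ∀ x ∈ H.edgeSet, ∀ y ∈ H.edgeSet, ∀ z ∈ H.edgeSet, x ≠ y → x ≠ z → y ≠ z →
    ∃ v, v ∈ x ∧ v ∈ y ∧ v ∈ z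

theorem exists_noConjugateForm_two_of_not_edgeTriplesConcurrent (h : ¬ EdgeTriplesConcurrent H) :
    ∃ N : Matrix V (Fin 2) ℝ, NoConjugateForm H N := by
  rw [EdgeTriplesConcurrent] at h
  push Not at h
  obtain ⟨x, hx, y, hy, z, hz, hxy, hxz, hyz, hv⟩ := h
  by_cases hdxy : ∀ v ∈ x, v ∉ y
  · exact exists_noConjugateForm_two_of_disjoint hx hy hz hdxy hxz hyz
  by_cases hdxz : ∀ v ∈ x, v ∉ z
  · exact exists_noConjugateForm_two_of_disjoint hx hz hy hdxz hxy hyz.symm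
  by_cases hdyz : ∀ v ∈ y, v ∉ z
  · exact exists_noConjugateForm_two_of_disjoint hy hz hx hdyz hxy.symm hxz.symm
  push Not at hdxy hdxz hdyz
  obtain ⟨a, hax, hay⟩ := hdxy
  obtain ⟨b, hbx, hbz⟩ := hdxz
  obtain ⟨c, hcy, hcz⟩ := hdyz
  have hab : a ≠ b := fun hab => hv a hax hay (hab ▸ hbz)
  have hac : a ≠ c := fun hac => hv a hax hay (hac ▸ hcz)
  have hbc : b ≠ c := fun hbc => hv b hbx (hbc ▸ hcy) hbz
  rw [(Sym2.mem_and_mem_iff hab).1 ⟨hax, hbx⟩] at hx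
  rw [(Sym2.mem_and_mem_iff hac).1 ⟨hay, hcy⟩] at hy
  rw [(Sym2.mem_and_mem_iff hbc).1 ⟨hbz, hcz⟩] at hz
  exact exists_noConjugateForm_two_of_triangle hx hz hy

end Certificates

section Persistence

variable {E P ι : Type*} [TopologicalSpace E] [AddCommGroup P] [Module ℝ P] [TopologicalSpace P]
  [IsTopologicalAddGroup P] [ContinuousSMul ℝ P] [Finite ι]

/- With a right inverse of `L x₀` given by vectors `b l`, the correction to `a₀` solves a square
linear system whose matrix depends continuously on `x` and is the identity at `x₀`. -/
theorem exists_continuousAt_eventually_map_eq_zero {L : E → P →ₗ[ℝ] ι → ℝ} {x₀ : E} {a₀ : P}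
    (hL : ∀ a, ContinuousAt (fun x => L x a) x₀) (hsurj : Function.Surjective (L x₀))
    (h₀ : L x₀ a₀ = 0) :
    ∃ A : E → P, ContinuousAt A x₀ ∧ A x₀ = a₀ ∧ ∀ᶠ x in nhds x₀, L x (A x) = 0 := by
  classical
  have := Fintype.ofFinite ι
  choose b hb using fun l => hsurj (Pi.single l 1)
  let M : E → Matrix ι ι ℝ := fun x => of fun i l => L x (b l) i
  have hM : ContinuousAt M x₀ :=
    continuousAt_pi.2 fun i => continuousAt_pi.2 fun l => continuousAt_pi.1 (hL (b l)) i
  have hM₀ : M x₀ = 1 := by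
    ext i l
    simp [M, hb, Pi.single_apply, one_apply]
  have hdet : (M x₀).det ≠ 0 := by rw [hM₀, det_one]; exact one_ne_zero
  have hinv : ContinuousAt (fun x => (M x)⁻¹) x₀ :=
    (continuousAt_matrix_inv _ (NormedRing.inverse_continuousAt hdet.isUnit.unit)).comp hM
  let c : E → ι → ℝ := fun x => (M x)⁻¹ *ᵥ L x a₀
  have hc : ContinuousAt c x₀ :=
    (continuous_fst.matrix_mulVec continuous_snd).continuousAt.comp (hinv.prodMk (hL a₀))
  refine ⟨fun x => a₀ - ∑ l, c x l • b l, ?_, ?_, ?_⟩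
  · refine continuousAt_const.sub (tendsto_finsetSum _ fun l _ => ?_)
    exact (continuousAt_pi.1 hc l).smul continuousAt_const
  · simp [c, h₀]
  · have hdetM : ContinuousAt (fun x => (M x).det) x₀ :=
      (Continuous.matrix_det continuous_id).continuousAt.comp hM
    filter_upwards [hdetM.eventually_ne hdet] with x hx
    have hsum : L x (∑ l, c x l • b l) = M x *ᵥ c x := by
      ext i
      simp [M, mulVec, dotProduct, mul_comm]
    rw [map_sub, hsum, mulVec_mulVec, mul_nonsing_inv _ hx.isUnit, one_mulVec, sub_self]

theorem eventually_posDef_of_isHermitian {M : Matrix ι ι ℝ} (hM : M.PosDef) :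
    ∀ᶠ A in nhds M, A.IsHermitian → A.PosDef := by
  have := Fintype.ofFinite ι
  have hsphere := (isCompact_sphere (0 : ι → ℝ) 1).eventually_forall_of_forall_eventually
    (x₀ := M) (P := fun A x => 0 < x ⬝ᵥ A *ᵥ x) fun x hx => by
      have hcont : Continuous fun z : Matrix ι ι ℝ × (ι → ℝ) => z.2 ⬝ᵥ z.1 *ᵥ z.2 := by fun_prop
      exact hcont.continuousAt.eventually_const_lt
        (hM.dotProduct_mulVec_pos (ne_zero_of_mem_unit_sphere ⟨x, hx⟩))
  filter_upwards [hsphere] with A hA hherm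
  refine PosDef.of_dotProduct_mulVec_pos hherm fun x hx => ?_
  have hpos := hA (‖x‖⁻¹ • x) (by simp [norm_smul, hx])
  rw [mulVec_smul, smul_dotProduct, dotProduct_smul, smul_smul, smul_eq_mul] at hpos
  exact pos_of_mul_pos_right hpos (by positivity)

end Persistence

section OpenStress

variable {V : Type*} [Fintype V] {H : SimpleGraph V} {k r : ℕ}

/-- The data matrices with `k` columns that have a positive semidefinite stress contain a nonempty
open set. -/
def HasOpenStress (H : SimpleGraph V) (k : ℕ) : Prop :=
  ∃ X₀ : Matrix V (Fin k) ℝ, ∀ᶠ X in nhds X₀, ∃ K, IsPSDStress H X K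

theorem exists_transpose_mul_eq_zero_of_card_le (N : Matrix V (Fin r) ℝ)
    (hk : k + r ≤ Fintype.card V) :
    ∃ X : Matrix V (Fin k) ℝ, Xᵀ * N = 0 ∧ Function.Injective X.mulVec := by
  let U := LinearMap.ker Nᵀ.mulVecLin
  have hU : k ≤ Module.finrank ℝ U := by
    change k ≤ Module.finrank ℝ (LinearMap.ker Nᵀ.mulVecLin)
    have hrank := Nᵀ.mulVecLin.finrank_range_add_finrank_ker
    have hrange := Submodule.finrank_le (LinearMap.range Nᵀ.mulVecLin)
    rw [Module.finrank_fintype_fun_eq_card] at hrank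
    rw [Module.finrank_fin_fun] at hrange
    omega
  let b := Module.finBasis ℝ U
  refine ⟨of fun i l => (b (Fin.castLE hU l) : V → ℝ) i, ?_, ?_⟩
  · rw [← transpose_eq_zero, transpose_mul, transpose_transpose]
    ext a l
    exact congrFun (b (Fin.castLE hU l)).2 a
  · rw [mulVec_injective_iff]
    exact (b.linearIndependent.map' U.subtype U.ker_subtype).comp _ (Fin.castLE_injective hU)

/- For data `X` close to `X₀`, where `X₀` is orthogonal to `N₀`, some `N` close to `N₀` is
orthogonal to `X`, and then `N * A * Nᵀ` annihilates `X`. -/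
theorem hasOpenStress_of_eventually (hk : k + r ≤ Fintype.card V) {N₀ : Matrix V (Fin r) ℝ}
    (h : ∀ᶠ N in nhds N₀, ∃ A : Matrix (Fin r) (Fin r) ℝ,
      A.PosSemidef ∧ N * A * Nᵀ ≠ 0 ∧ N * A * Nᵀ ∈ vanishingSpace H) : HasOpenStress H k := by
  obtain ⟨X₀, hX₀N, hX₀⟩ := exists_transpose_mul_eq_zero_of_card_le N₀ hk
  obtain ⟨Y, hY⟩ := exists_mul_eq_one_of_injective_mulVec hX₀
  let L : Matrix V (Fin k) ℝ → Matrix V (Fin r) ℝ →ₗ[ℝ] Fin k × Fin r → ℝ := fun X =>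
    LinearMap.pi fun p => entryLinearMap ℝ ℝ p.1 p.2 ∘ₗ mulLeftLinearMap (Fin r) ℝ Xᵀ
  have hL : ∀ X N p, L X N p = (Xᵀ * N) p.1 p.2 := fun X N p => rfl
  have hcont : ∀ N, ContinuousAt (fun X => L X N) X₀ := fun N => continuousAt_pi.2 fun p => by
    simp only [hL]
    fun_prop
  have hsurj : Function.Surjective (L X₀) := fun B => by
    refine ⟨Yᵀ * of fun l a => B (l, a), funext fun p => ?_⟩
    rw [hL, ← Matrix.mul_assoc, ← transpose_mul, hY, transpose_one, Matrix.one_mul]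
    rfl
  obtain ⟨N, hN, hN₀, hLN⟩ := exists_continuousAt_eventually_map_eq_zero hcont hsurj
    (funext fun p => by rw [hL, hX₀N]; rfl)
  rw [← hN₀] at h
  refine ⟨X₀, ?_⟩
  filter_upwards [hLN, hN.eventually h] with X hX hA
  obtain ⟨A, hA, hne, hmem⟩ := hA
  refine ⟨N X * A * (N X)ᵀ, hA.mul_mul_conjTranspose_same (N X), hne, hmem, ?_⟩
  have hNX : (N X)ᵀ * X = 0 := by
    rw [← transpose_eq_zero, transpose_mul, transpose_transpose]
    ext l a
    exact congrFun hX (l, a)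
  rw [Matrix.mul_assoc, hNX, Matrix.mul_zero]

end OpenStress

section OrthogonalRepresentation

variable {V W : Type*} {H : SimpleGraph V} {T : SimpleGraph W} {k r : ℕ}

/-- An orthogonal representation of the edges of `H` by nonzero vectors, at which the quadratic
conditions `v i ⬝ᵥ B *ᵥ v j = 0` that the edges impose on a symmetric matrix `B` are linearly
independent. -/
structure IsIndepOrthRep (H : SimpleGraph V) (v : V → Fin r → ℝ) : Prop where
  ne_zero : ∀ i, v i ≠ 0
  orthogonal : ∀ i j, H.Adj i j → v i ⬝ᵥ v j = 0
  exists_form : ∀ g : Sym2 V → ℝ, ∃ B : Matrix (Fin r) (Fin r) ℝ,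
    Bᵀ = B ∧ ∀ i j, H.Adj i j → v i ⬝ᵥ B *ᵥ v j = g s(i, j)

theorem IsIndepOrthRep.comp {w : W → Fin r → ℝ} (hw : IsIndepOrthRep T w) (φ : H →g T)
    (hφ : H.edgeSet.InjOn (Sym2.map φ)) : IsIndepOrthRep H (w ∘ φ) where
  ne_zero i := hw.ne_zero (φ i)
  orthogonal i j hij := hw.orthogonal _ _ (φ.map_adj hij)
  exists_form g := by
    obtain ⟨B, hB, hBg⟩ := hw.exists_form
      (Function.extend (H.edgeSet.domRestrict (Sym2.map φ)) (fun e => g e) 0)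
    refine ⟨B, hB, fun i j hij => ?_⟩
    exact (hBg _ _ (φ.map_adj hij)).trans
      (hφ.injective.extend_apply (fun e => g e) 0 ⟨s(i, j), hij⟩)

theorem dotProduct_mulVec_comm_of_transpose_eq {l : Type*} [Fintype l] {B : Matrix l l ℝ}
    (hB : Bᵀ = B) (x y : l → ℝ) : x ⬝ᵥ B *ᵥ y = y ⬝ᵥ B *ᵥ x := by
  rw [dotProduct_comm, ← vecMul_transpose, hB, ← dotProduct_mulVec]

/-- The values of the symmetric form `B + Bᵀ` at the rows `a e` and `b e` of `N`, as a linear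
function of `B`. -/
def symmetrizedFormValues {ι : Type*} (N : Matrix V (Fin r) ℝ) (a b : ι → V) :
    Matrix (Fin r) (Fin r) ℝ →ₗ[ℝ] ι → ℝ :=
  LinearMap.pi fun e => entryLinearMap ℝ ℝ (a e) (b e) ∘ₗ mulRightLinearMap V ℝ Nᵀ ∘ₗ
    mulLeftLinearMap (Fin r) ℝ N ∘ₗ
      (LinearMap.id + (transposeLinearEquiv (Fin r) (Fin r) ℝ ℝ).toLinearMap)

theorem symmetrizedFormValues_apply {ι : Type*} (N : Matrix V (Fin r) ℝ) (a b : ι → V)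
    (B : Matrix (Fin r) (Fin r) ℝ) (e : ι) :
    symmetrizedFormValues N a b B e = N (a e) ⬝ᵥ (B + Bᵀ) *ᵥ N (b e) :=
  mul_mul_transpose_apply N (B + Bᵀ) (a e) (b e)

theorem IsIndepOrthRep.exists_continuousAt_form [Finite V] {v : V → Fin r → ℝ}
    (hv : IsIndepOrthRep H v) :
    ∃ A : Matrix V (Fin r) ℝ → Matrix (Fin r) (Fin r) ℝ, ContinuousAt A (of v) ∧ A (of v) = 1 ∧
      ∀ᶠ N in nhds (of v), (A N)ᵀ = A N ∧ ∀ i j, H.Adj i j → N i ⬝ᵥ A N *ᵥ N j = 0 := by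
  have hends : ∀ e : H.edgeSet, ∃ i j, s(i, j) = e.1 := fun e => e.1.ind fun i j => ⟨i, j, rfl⟩
  choose a b hab using hends
  have hadj : ∀ e, H.Adj (a e) (b e) := fun e => H.mem_edgeSet.1 ((hab e).symm ▸ e.2)
  have hhalf : ∀ B : Matrix (Fin r) (Fin r) ℝ, Bᵀ = B →
      (1 / 2 : ℝ) • B + ((1 / 2 : ℝ) • B)ᵀ = B := fun B hB => by
    rw [transpose_smul, hB, ← add_smul, add_halves, one_smul]
  have hcont : ∀ B, ContinuousAt (fun N => symmetrizedFormValues N a b B) (of v) :=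
    fun B => continuousAt_pi.2 fun e => by
      simp only [symmetrizedFormValues_apply, dotProduct, mulVec]
      fun_prop
  have hsurj : Function.Surjective (symmetrizedFormValues (of v) a b) := fun g => by
    obtain ⟨B, hB, hBg⟩ := hv.exists_form (Function.extend Subtype.val g 0)
    refine ⟨(1 / 2 : ℝ) • B, funext fun e => ?_⟩
    rw [symmetrizedFormValues_apply, hhalf B hB]
    refine (hBg _ _ (hadj e)).trans ?_
    rw [hab, Subtype.val_injective.extend_apply]
  obtain ⟨B, hB, hB₀, hBN⟩ := exists_continuousAt_eventually_map_eq_zero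
    (a₀ := (1 / 2 : ℝ) • 1) hcont hsurj (funext fun e => by
      rw [symmetrizedFormValues_apply, hhalf 1 transpose_one, one_mulVec]
      exact hv.orthogonal _ _ (hadj e))
  refine ⟨fun N => B N + (B N)ᵀ, hB.add (continuous_id.matrix_transpose.continuousAt.comp hB),
    by simp only [hB₀, hhalf 1 transpose_one], ?_⟩
  filter_upwards [hBN] with N hN
  have hT : (B N + (B N)ᵀ)ᵀ = B N + (B N)ᵀ := by
    rw [transpose_add, transpose_transpose, add_comm]
  refine ⟨hT, fun i j hij => ?_⟩
  have he := (symmetrizedFormValues_apply N a b (B N) ⟨s(i, j), hij⟩).symm.trans (congrFun hN _)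
  rcases Sym2.eq_iff.1 (hab ⟨s(i, j), hij⟩) with ⟨hi, hj⟩ | ⟨hi, hj⟩
  · rwa [hi, hj] at he
  · rw [hi, hj] at he
    exact (dotProduct_mulVec_comm_of_transpose_eq hT _ _).trans he

/- Since the edge conditions on a symmetric matrix are independent at `v`, the solution `A = 1`
at `v` deforms to a positive definite solution at every `N` close to `v`. -/
theorem IsIndepOrthRep.eventually_exists_posDef [Finite V] {v : V → Fin r → ℝ}
    (hv : IsIndepOrthRep H v) : ∀ᶠ N : Matrix V (Fin r) ℝ in nhds (of v),
      ∃ A : Matrix (Fin r) (Fin r) ℝ, A.PosDef ∧ N * A * Nᵀ ∈ vanishingSpace H := by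
  obtain ⟨A, hA, hA₀, hAH⟩ := hv.exists_continuousAt_form
  have hpos : ∀ᶠ B in nhds (A (of v)), B.IsHermitian → B.PosDef := by
    rw [hA₀]
    exact eventually_posDef_of_isHermitian PosDef.one
  filter_upwards [hAH, hA.eventually hpos] with N ⟨hT, hN⟩ hNpos
  refine ⟨A N, hNpos hT, ?_, fun i j hij => ?_⟩
  · simp only [transpose_mul, transpose_transpose, hT, Matrix.mul_assoc]
  · rw [mul_mul_transpose_apply, hN i j hij]

theorem IsIndepOrthRep.hasOpenStress [Fintype V] [NeZero r] {v : V → Fin r → ℝ}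
    (hv : IsIndepOrthRep H v) (hk : k + r ≤ Fintype.card V) : HasOpenStress H k := by
  have hr := NeZero.pos r
  obtain ⟨i⟩ : Nonempty V := Fintype.card_pos_iff.1 (by omega)
  have hrow : ∀ᶠ N : Matrix V (Fin r) ℝ in nhds (of v), N i ≠ 0 :=
    (continuous_apply i).continuousAt.eventually_ne (hv.ne_zero i)
  refine hasOpenStress_of_eventually hk (N₀ := of v) ?_
  filter_upwards [hv.eventually_exists_posDef, hrow] with N ⟨A, hA, hmem⟩ hNi
  refine ⟨A, hA.posSemidef, fun hzero => (hA.dotProduct_mulVec_pos hNi).ne' ?_, hmem⟩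
  exact (mul_mul_transpose_apply N A i i).symm.trans (congrFun (congrFun hzero i) i)

end OrthogonalRepresentation

section SparseNonedges

variable {V W : Type*} {H : SimpleGraph V} {k : ℕ}

theorem one_submatrix_mul_mul_apply {f : W → V} [Fintype W] [DecidableEq V] (K : Matrix W W ℝ)
    (hf : Function.Injective f) (a b : W) :
    ((1 : Matrix V V ℝ).submatrix id f * K * ((1 : Matrix V V ℝ).submatrix id f)ᵀ) (f a) (f b) =
      K a b := by
  classical
  have hrow : ∀ a, (1 : Matrix V V ℝ).submatrix id f (f a) = Pi.single a 1 := fun a => by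
    ext c
    simp [one_apply, Pi.single_apply, hf.eq_iff, eq_comm]
  rw [mul_mul_transpose_apply, hrow, hrow, mulVec_single_one, single_one_dotProduct, col_apply]

theorem isIndepOrthRep_bot {r : ℕ} [NeZero r] :
    IsIndepOrthRep (⊥ : SimpleGraph V) (fun _ => 1 : V → Fin r → ℝ) where
  ne_zero _ := one_ne_zero
  orthogonal _ _ h := h.elim
  exists_form _ := ⟨0, transpose_zero, fun _ _ h => h.elim⟩

theorem isIndepOrthRep_of_edgeSet_subset_pair [DecidableEq V] {a b c d : V} (hab : a ≠ b)
    (hac : a ≠ c) (had : a ≠ d) (hbc : b ≠ c) (hbd : b ≠ d) (hcd : c ≠ d)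
    (hH : H.edgeSet ⊆ {s(a, b), s(c, d)}) :
    IsIndepOrthRep H (fun i => if i = a then ![1, 0] else if i = b then ![0, 1] else
      if i = c then ![1, 1] else ![1, -1] : V → Fin 2 → ℝ) where
  ne_zero i := by
    split_ifs <;> simp
  orthogonal i j hij := by
    rcases hH (H.mem_edgeSet.2 hij) with h | h <;>
      rcases Sym2.eq_iff.1 h with ⟨rfl, rfl⟩ | ⟨rfl, rfl⟩ <;>
        simp [hab.symm, hac.symm, had.symm, hbc.symm, hbd.symm, hcd.symm]
  exists_form g := by
    refine ⟨!![g s(c, d), g s(a, b); g s(a, b), 0], ?_, fun i j hij => ?_⟩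
    · ext i j
      fin_cases i <;> fin_cases j <;> rfl
    · rcases hH (H.mem_edgeSet.2 hij) with h | h <;> rw [h] <;>
        rcases Sym2.eq_iff.1 h with ⟨rfl, rfl⟩ | ⟨rfl, rfl⟩ <;>
          simp [vecHead, vecTail, hab.symm, hac.symm, had.symm, hbc.symm, hbd.symm, hcd.symm]

theorem EdgeTriplesConcurrent.exists_forall_mem_or_exists_subset_pair [Nonempty V]
    (hH : EdgeTriplesConcurrent H) : (∃ v, ∀ e ∈ H.edgeSet, v ∈ e) ∨
      ∃ x ∈ H.edgeSet, ∃ y ∈ H.edgeSet, (∀ v ∈ x, v ∉ y) ∧ H.edgeSet ⊆ {x, y} := by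
  refine or_iff_not_imp_left.2 fun hstar => ?_
  push Not at hstar
  obtain ⟨x, hx, -⟩ := hstar (Classical.arbitrary V)
  induction x with | _ a b
  obtain ⟨y, hy, hay⟩ := hstar a
  obtain ⟨z, hz, hbz⟩ := hstar b
  have hxy : s(a, b) ≠ y := fun h => hay (h ▸ Sym2.mem_mk_left a b)
  have hxz : s(a, b) ≠ z := fun h => hbz (h ▸ Sym2.mem_mk_right a b)
  have hyz : y = z := by
    by_contra hyz
    obtain ⟨v, hvx, hvy, hvz⟩ := hH _ hx _ hy _ hz hxy hxz hyz
    rcases Sym2.mem_iff.1 hvx with rfl | rfl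
    exacts [hay hvy, hbz hvz]
  have hdisj : ∀ v ∈ s(a, b), v ∉ y := by
    rw [Sym2.ball]
    exact ⟨hay, hyz ▸ hbz⟩
  refine ⟨s(a, b), hx, y, hy, hdisj, fun w hw => or_iff_not_imp_left.2 fun hwx => ?_⟩
  by_contra hwy
  obtain ⟨v, hvx, hvy, -⟩ := hH _ hx _ hy _ hw hxy (Ne.symm hwx) (Ne.symm hwy)
  exact hdisj v hvx hvy

theorem edgeTriplesConcurrent_of_ncard_le_two [Finite V] (hH : H.edgeSet.ncard ≤ 2) :
    EdgeTriplesConcurrent H := by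
  intro x hx y hy z hz hxy hxz hyz
  have hcard : ({x, y, z} : Set (Sym2 V)).ncard ≤ 2 :=
    (Set.ncard_le_ncard (Set.insert_subset hx (Set.insert_subset hy
      (Set.singleton_subset_iff.2 hz))) (Set.toFinite _)).trans hH
  rw [Set.ncard_eq_three.2 ⟨x, y, z, hxy, hxz, hyz, rfl⟩] at hcard
  omega

variable [Fintype V]

theorem IsPSDStress.extend [Fintype W] (f : W ↪ V) {X : Matrix V (Fin k) ℝ} {K : Matrix W W ℝ}
    (hK : IsPSDStress (H.comap f) (X.submatrix f id) K) : ∃ K, IsPSDStress H X K := by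
  classical
  obtain ⟨hpsd, hne, hmem, hKX⟩ := hK
  let P := (1 : Matrix V V ℝ).submatrix id f
  have hP : ∀ a b, (P * K * Pᵀ) (f a) (f b) = K a b :=
    one_submatrix_mul_mul_apply K f.injective
  have hrow : ∀ i ∉ Set.range f, P i = 0 := fun i hi => by
    ext a
    exact one_apply_ne fun h => hi ⟨a, h.symm⟩
  refine ⟨P * K * Pᵀ, hpsd.mul_mul_conjTranspose_same P, fun h => hne ?_, ⟨?_, ?_⟩, ?_⟩
  · ext a b
    rw [← hP, h, Matrix.zero_apply, Matrix.zero_apply]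
  · simp only [transpose_mul, transpose_transpose, hmem.1, Matrix.mul_assoc]
  · intro i j hij
    by_cases hi : i ∈ Set.range f
    · by_cases hj : j ∈ Set.range f
      · obtain ⟨⟨a, rfl⟩, b, rfl⟩ := hi, hj
        rw [hP, hmem.2 a b hij]
      · rw [mul_mul_transpose_apply, hrow j hj, mulVec_zero, dotProduct_zero]
    · rw [mul_mul_transpose_apply, hrow i hi, zero_dotProduct]
  · have hPX : Pᵀ * X = X.submatrix f id := by
      rw [transpose_submatrix, transpose_one]
      exact one_submatrix_mul f (Equiv.refl V) X
    rw [Matrix.mul_assoc, hPX, Matrix.mul_assoc, hKX, Matrix.mul_zero]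

theorem HasOpenStress.of_comap [Fintype W] (f : W ↪ V) (h : HasOpenStress (H.comap f) k) :
    HasOpenStress H k := by
  obtain ⟨X₀, hX₀⟩ := h
  refine ⟨of (Function.extend f X₀ 0), ?_⟩
  have hcont : Continuous fun X : Matrix V (Fin k) ℝ => X.submatrix f id := by fun_prop
  have hX₀' : (of (Function.extend f X₀ 0)).submatrix f id = X₀ := by
    ext a l
    exact congrFun (f.injective.extend_apply X₀ 0 a) l
  rw [← hX₀'] at hX₀
  filter_upwards [hcont.continuousAt.eventually hX₀] with X ⟨K, hK⟩
  exact hK.extend f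

theorem HasOpenStress.of_induce {s : Set V} [Fintype s] (h : HasOpenStress (H.induce s) k) :
    HasOpenStress H k :=
  h.of_comap (Function.Embedding.subtype (· ∈ s))

theorem hasOpenStress_bot (hk : k + 1 ≤ Fintype.card V) :
    HasOpenStress (⊥ : SimpleGraph V) k :=
  isIndepOrthRep_bot.hasOpenStress hk

theorem hasOpenStress_of_forall_mem {v : V} (hv : ∀ e ∈ H.edgeSet, v ∈ e)
    (hk : k + 2 ≤ Fintype.card V) : HasOpenStress H k := by
  classical
  have hbot : H.induce {v}ᶜ = ⊥ := by
    ext i j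
    simp only [SimpleGraph.comap_adj, SimpleGraph.bot_adj, iff_false]
    intro hij
    rcases Sym2.mem_iff.1 (hv _ hij) with h | h
    exacts [i.2 h.symm, j.2 h.symm]
  refine HasOpenStress.of_induce (s := {v}ᶜ) (by
    rw [hbot]
    refine hasOpenStress_bot ?_
    rw [Fintype.card_compl_set, Set.card_singleton]
    omega)

theorem EdgeTriplesConcurrent.hasOpenStress (hH : EdgeTriplesConcurrent H)
    (hk : k + 2 ≤ Fintype.card V) : HasOpenStress H k := by
  classical
  have : Nonempty V := Fintype.card_pos_iff.1 (by omega)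
  rcases hH.exists_forall_mem_or_exists_subset_pair with ⟨v, hv⟩ | ⟨x, hx, y, hy, hdisj, hxy⟩
  · exact hasOpenStress_of_forall_mem hv hk
  · induction x with | _ a b
    induction y with | _ c d
    simp only [Sym2.mem_iff, forall_eq_or_imp, forall_eq, not_or] at hdisj
    exact (isIndepOrthRep_of_edgeSet_subset_pair (H.ne_of_adj hx) hdisj.1.1 hdisj.1.2 hdisj.2.1
      hdisj.2.2 (H.ne_of_adj hy) hxy).hasOpenStress hk

end SparseNonedges

section DegreeTwo

variable {V W : Type*} {H : SimpleGraph V}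

theorem exists_ncard_neighborSet_eq_one_of_isAcyclic [Finite V] (hH : H.IsAcyclic)
    (hdeg : ∀ v, (H.neighborSet v).ncard ≤ 2) (hne : H ≠ ⊥) :
    ∃ v, (H.neighborSet v).ncard = 1 := by
  by_contra! h
  have hcycles : H.IsCycles := fun v hv => by
    have := (Set.ncard_pos (Set.toFinite _)).2 hv
    have := hdeg v
    have := h v
    omega
  obtain ⟨a, b, hab⟩ := SimpleGraph.ne_bot_iff_exists_adj.1 hne
  obtain ⟨p, hp, -⟩ := hcycles.exists_cycle_toSubgraph_verts_eq_connectedComponentSupp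
    SimpleGraph.ConnectedComponent.connectedComponentMk_mem ⟨b, hab⟩
  exact hH p hp

theorem ncard_edgeSet_deleteIncidenceSet [Finite V] (v : V) :
    (H.deleteIncidenceSet v).edgeSet.ncard = H.edgeSet.ncard - (H.neighborSet v).ncard := by
  classical
  have := Fintype.ofFinite V
  simp only [← SimpleGraph.coe_edgeFinset, ← SimpleGraph.coe_neighborFinset, Set.ncard_coe_finset,
    SimpleGraph.card_edgeFinset_deleteIncidenceSet, SimpleGraph.card_neighborFinset_eq_degree]

theorem ncard_edgeSet_induce_compl_singleton [Finite V] (v : V) :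
    (H.induce {v}ᶜ).edgeSet.ncard = H.edgeSet.ncard - (H.neighborSet v).ncard := by
  classical
  have := Fintype.ofFinite V
  rw [← ncard_edgeSet_deleteIncidenceSet, ← SimpleGraph.coe_edgeFinset,
    ← SimpleGraph.coe_edgeFinset, Set.ncard_coe_finset, Set.ncard_coe_finset,
    SimpleGraph.card_edgeFinset_induce_compl_singleton,
    SimpleGraph.card_edgeFinset_deleteIncidenceSet]

theorem exists_injOn_hom_pathGraph_of_neighborSet_eq_singleton {a b : V} {m : ℕ}
    (hab : H.neighborSet a = {b}) (φ : H.deleteIncidenceSet a →g SimpleGraph.pathGraph (m + 1))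
    (hφ : (H.deleteIncidenceSet a).edgeSet.InjOn (Sym2.map φ)) (hb : φ b = 0) :
    ∃ ψ : H →g SimpleGraph.pathGraph (m + 2), H.edgeSet.InjOn (Sym2.map ψ) ∧ ψ a = 0 := by
  classical
  have hadj : ∀ c, H.Adj a c ↔ c = b := Set.ext_iff.1 hab
  let f : V → Fin (m + 2) := fun i => if i = a then 0 else (φ i).succ
  have hab' : Sym2.map f s(a, b) = s(0, 1) := by
    simp [f, (H.ne_of_adj ((hadj b).2 rfl)).symm, hb]
  have hedge : ∀ e ∈ H.edgeSet, e = s(a, b) ∨ e ∈ (H.deleteIncidenceSet a).edgeSet ∧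
      Sym2.map f e = Sym2.map Fin.succ (Sym2.map φ e) := fun e he => by
    induction e with | _ i j
    by_cases hi : i = a
    · rw [hi, (hadj j).1 (hi ▸ he)]
      exact Or.inl rfl
    by_cases hj : j = a
    · rw [hj, (hadj i).1 (hj ▸ H.adj_symm he), Sym2.eq_swap]
      exact Or.inl rfl
    · exact Or.inr ⟨SimpleGraph.deleteIncidenceSet_adj.2 ⟨he, hi, hj⟩, by simp [f, hi, hj]⟩
  have hzero : ∀ e, s(0, 1) ≠ Sym2.map Fin.succ (Sym2.map φ e) := fun e h => by
    obtain ⟨i, -, hi⟩ := Sym2.mem_map.1 (h ▸ Sym2.mem_mk_left 0 1)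
    exact Fin.succ_ne_zero i hi
  refine ⟨⟨f, fun {i j} hij => ?_⟩, fun e he e' he' h => ?_, if_pos rfl⟩
  · rw [← SimpleGraph.mem_edgeSet, ← Sym2.map_mk]
    rcases hedge _ (H.mem_edgeSet.2 hij) with h | ⟨h, hf⟩
    · rw [h, hab', SimpleGraph.mem_edgeSet, SimpleGraph.pathGraph_adj]
      exact Or.inl rfl
    · rw [hf, Sym2.map_mk, Sym2.map_mk, SimpleGraph.mem_edgeSet]
      simpa [SimpleGraph.pathGraph_adj] using SimpleGraph.pathGraph_adj.1 (φ.map_adj h)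
  · change Sym2.map f e = Sym2.map f e' at h
    rcases hedge e he with rfl | ⟨hd, hf⟩ <;> rcases hedge e' he' with rfl | ⟨hd', hf'⟩
    · rfl
    · exact (hzero e' (hab' ▸ h.trans hf')).elim
    · exact (hzero e (hab' ▸ h.symm.trans hf)).elim
    · exact hφ hd hd' (Sym2.map.injective (Fin.succ_injective _) (hf ▸ hf' ▸ h))

theorem exists_injOn_hom_pathGraph_of_neighborSet_eq_empty {a : V} {m : ℕ}
    (ha : H.neighborSet a = ∅) (φ : H →g SimpleGraph.pathGraph (m + 1))
    (hφ : H.edgeSet.InjOn (Sym2.map φ)) :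
    ∃ ψ : H →g SimpleGraph.pathGraph (m + 1), H.edgeSet.InjOn (Sym2.map ψ) ∧ ψ a = 0 := by
  classical
  have hadj : ∀ c, ¬ H.Adj a c := Set.eq_empty_iff_forall_notMem.1 ha
  have hf : ∀ i j, H.Adj i j → Function.update φ a 0 i = φ i := fun i j hij =>
    Function.update_of_ne (by rintro rfl; exact hadj j hij) ..
  refine ⟨⟨Function.update φ a 0, fun {i j} hij => ?_⟩, ?_, Function.update_self a 0 φ⟩
  · rw [hf i j hij, hf j i hij.symm]
    exact φ.map_adj hij
  · refine hφ.congr fun e he => ?_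
    induction e with | _ i j
    exact congrArg₂ (s(·, ·)) (hf i j he).symm (hf j i (H.adj_symm he)).symm

theorem exists_injOn_hom_pathGraph_of_isAcyclic [Finite V] (hH : H.IsAcyclic)
    (hdeg : ∀ v, (H.neighborSet v).ncard ≤ 2) {m : ℕ} (hm : H.edgeSet.ncard ≤ m) {a : V}
    (ha : (H.neighborSet a).ncard ≤ 1) :
    ∃ φ : H →g SimpleGraph.pathGraph (m + 1), H.edgeSet.InjOn (Sym2.map φ) ∧ φ a = 0 := by
  induction m generalizing H a with
  | zero =>
    have hE : H.edgeSet = ∅ := (Set.ncard_eq_zero (Set.toFinite _)).1 (Nat.le_zero.1 hm)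
    obtain rfl := SimpleGraph.edgeSet_eq_empty.1 hE
    exact ⟨⟨fun _ => 0, False.elim⟩, by simp, rfl⟩
  | succ m ih =>
    have of_leaf : ∀ c, (H.neighborSet c).ncard = 1 → ∃ φ : H →g SimpleGraph.pathGraph (m + 2),
        H.edgeSet.InjOn (Sym2.map φ) ∧ φ c = 0 := fun c hc => by
      obtain ⟨b, hb⟩ := Set.ncard_eq_one.1 hc
      have hle := H.deleteIncidenceSet_le c
      have hnbr : ∀ v, (H.deleteIncidenceSet c).neighborSet v ⊆ H.neighborSet v \ {c} :=
        fun v w hw => ⟨hle hw, (SimpleGraph.deleteIncidenceSet_adj.1 hw).2.2⟩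
      have hcb : c ∈ H.neighborSet b := H.adj_symm (Set.ext_iff.1 hb b |>.2 rfl)
      obtain ⟨φ, hφ, hφb⟩ := ih (hH.anti hle)
        (fun v => (Set.ncard_le_ncard ((hnbr v).trans Set.sdiff_subset)).trans (hdeg v))
        (by rw [ncard_edgeSet_deleteIncidenceSet, hc]; omega) (a := b) (by
          have := Set.ncard_le_ncard (hnbr b)
          rw [Set.ncard_sdiff_singleton_of_mem hcb] at this
          have := hdeg b
          omega)
      exact exists_injOn_hom_pathGraph_of_neighborSet_eq_singleton hb φ hφ hφb
    rcases Nat.le_one_iff_eq_zero_or_eq_one.1 ha with ha | ha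
    · by_cases hbot : H = ⊥
      · subst hbot
        exact ⟨⟨fun _ => 0, False.elim⟩, by simp, rfl⟩
      · obtain ⟨c, hc⟩ := exists_ncard_neighborSet_eq_one_of_isAcyclic hH hdeg hbot
        obtain ⟨φ, hφ, -⟩ := of_leaf c hc
        exact exists_injOn_hom_pathGraph_of_neighborSet_eq_empty
          ((Set.ncard_eq_zero (Set.toFinite _)).1 ha) φ hφ
    · exact of_leaf a ha

theorem exists_injective_hom_cycleGraph_of_not_isAcyclic (hH : ¬ H.IsAcyclic) :
    ∃ (l : ℕ) (f : SimpleGraph.cycleGraph (l + 3) →g H), Function.Injective f := by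
  obtain ⟨v, c, hc⟩ : ∃ v, ∃ c : H.Walk v v, c.IsCycle := by
    simpa [SimpleGraph.IsAcyclic] using hH
  obtain ⟨l, hl⟩ := Nat.exists_eq_add_of_le' hc.three_le_length
  have hnext : ∀ i : Fin (l + 3), H.Adj (c.getVert i) (c.getVert (i + 1 : Fin (l + 3))) := by
    intro i
    have hadj := c.adj_getVert_succ (i := i) (by omega)
    rw [Fin.val_add_one]
    split_ifs with hi
    · rw [hi, Fin.val_last, ← hl, c.getVert_length] at hadj
      rwa [hi, Fin.val_last, c.getVert_zero]
    · exact hadj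
  refine ⟨l, ⟨fun i => c.getVert i, fun {i j} hij => ?_⟩, fun i j hij => ?_⟩
  · rcases SimpleGraph.cycleGraph_adj.1 hij with h | h
    · rw [sub_eq_iff_eq_add'.1 h]
      exact (hnext j).symm
    · rw [sub_eq_iff_eq_add'.1 h]
      exact hnext i
  · exact Fin.ext (hc.getVert_injOn' (by simp; omega) (by simp; omega) hij)

theorem exists_iso_sum_induce_compl_range {T : SimpleGraph W} {f : T →g H}
    (hf : Function.Injective f) (hadj : ∀ i w, H.Adj (f i) w → ∃ j, T.Adj i j ∧ f j = w) :
    Nonempty ((T ⊕g H.induce (Set.range f)ᶜ) ≃g H) := by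
  classical
  have hmap : ∀ i j, H.Adj (f i) (f j) ↔ T.Adj i j := fun i j => by
    refine ⟨fun h => ?_, f.map_adj⟩
    obtain ⟨j', hj', h⟩ := hadj i _ h
    exact hf h ▸ hj'
  have hcross : ∀ i (w : ↥(Set.range f)ᶜ), ¬ H.Adj (f i) w := fun i w h => by
    obtain ⟨j, -, hj⟩ := hadj i w h
    exact w.2 ⟨j, hj⟩
  refine ⟨⟨(Equiv.sumCongr (Equiv.ofInjective f hf) (Equiv.refl _)).trans
    (Equiv.Set.sumCompl (Set.range f)), ?_⟩⟩
  rintro (i | w) (j | w')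
  · exact hmap i j
  · simpa using hcross i w'
  · simpa using fun h => hcross j w (H.adj_symm h)
  · rfl

theorem exists_injOn_hom_pathGraph [Finite V] (hH : H.IsAcyclic)
    (hdeg : ∀ v, (H.neighborSet v).ncard ≤ 2) {m : ℕ} (hm : H.edgeSet.ncard ≤ m) :
    ∃ φ : H →g SimpleGraph.pathGraph (m + 1), H.edgeSet.InjOn (Sym2.map φ) := by
  rcases eq_or_ne H ⊥ with rfl | hne
  · exact ⟨⟨fun _ => 0, fun h => h.elim⟩, by simp⟩
  · obtain ⟨a, ha⟩ := exists_ncard_neighborSet_eq_one_of_isAcyclic hH hdeg hne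
    exact (exists_injOn_hom_pathGraph_of_isAcyclic hH hdeg hm ha.le).imp fun φ hφ => hφ.1

theorem ncard_neighborSet_cycleGraph (l : ℕ) (i : Fin (l + 3)) :
    ((SimpleGraph.cycleGraph (l + 3)).neighborSet i).ncard = 2 := by
  rw [← SimpleGraph.coe_neighborFinset, Set.ncard_coe_finset,
    SimpleGraph.card_neighborFinset_eq_degree, SimpleGraph.cycleGraph_degree_three_le]

theorem ncard_edgeSet_cycleGraph (l : ℕ) :
    (SimpleGraph.cycleGraph (l + 3)).edgeSet.ncard = l + 3 := by
  have h := (SimpleGraph.cycleGraph (l + 3)).sum_degrees_eq_twice_card_edges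
  simp only [SimpleGraph.cycleGraph_degree_three_le, Finset.sum_const, Finset.card_univ,
    Fintype.card_fin, smul_eq_mul] at h
  rw [← SimpleGraph.coe_edgeFinset, Set.ncard_coe_finset]
  omega

theorem ncard_edgeSet_sum [Finite V] [Finite W] (H : SimpleGraph V) (R : SimpleGraph W) :
    (H ⊕g R).edgeSet.ncard = H.edgeSet.ncard + R.edgeSet.ncard := by
  simp only [← Nat.card_coe_set_eq, Nat.card_congr SimpleGraph.edgeSetSumEquiv, Nat.card_sum]

theorem ncard_neighborSet_le_ncard_edgeSet [Finite V] (v : V) :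
    (H.neighborSet v).ncard ≤ H.edgeSet.ncard := by
  classical
  rw [← Nat.card_coe_set_eq, ← Nat.card_congr (H.incidenceSetEquivNeighborSet v),
    Nat.card_coe_set_eq]
  exact Set.ncard_le_ncard (H.incidenceSet_subset v)

theorem exists_two_le_ncard_neighborSet_of_not_isAcyclic [Finite V] (hH : ¬ H.IsAcyclic) :
    ∃ v, 2 ≤ (H.neighborSet v).ncard := by
  obtain ⟨l, f, hf⟩ := exists_injective_hom_cycleGraph_of_not_isAcyclic hH
  refine ⟨f 0, (ncard_neighborSet_cycleGraph l 0).ge.trans ?_⟩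
  rw [← Set.ncard_image_of_injective _ hf]
  exact Set.ncard_le_ncard (Set.image_subset_iff.2 fun j => f.map_adj)

theorem exists_iso_cycleGraph_sum_of_not_isAcyclic [Finite V]
    (hdeg : ∀ v, (H.neighborSet v).ncard ≤ 2) (hH : ¬ H.IsAcyclic) :
    ∃ (l : ℕ) (s : Set V), Nonempty ((SimpleGraph.cycleGraph (l + 3) ⊕g H.induce s) ≃g H) := by
  obtain ⟨l, f, hf⟩ := exists_injective_hom_cycleGraph_of_not_isAcyclic hH
  refine ⟨l, _, exists_iso_sum_induce_compl_range hf fun i w hw => ?_⟩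
  have himage : f '' (SimpleGraph.cycleGraph (l + 3)).neighborSet i = H.neighborSet (f i) := by
    refine Set.eq_of_subset_of_ncard_le (Set.image_subset_iff.2 fun j => f.map_adj) ?_
    rw [Set.ncard_image_of_injective _ hf, ncard_neighborSet_cycleGraph]
    exact hdeg _
  exact himage.ge hw

theorem ncard_edgeSet_of_iso_cycleGraph_sum [Finite V] [Finite W] {l : ℕ} {R : SimpleGraph W}
    (e : (SimpleGraph.cycleGraph (l + 3) ⊕g R) ≃g H) :
    H.edgeSet.ncard = l + 3 + R.edgeSet.ncard := by
  rw [← ncard_edgeSet_cycleGraph, ← ncard_edgeSet_sum, ← Nat.card_coe_set_eq,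
    ← Nat.card_congr e.mapEdgeSet, Nat.card_coe_set_eq]

theorem isAcyclic_of_ncard_edgeSet_le_two [Finite V] (hH : H.edgeSet.ncard ≤ 2) :
    H.IsAcyclic := by
  by_contra hcyc
  obtain ⟨l, s, ⟨e⟩⟩ := exists_iso_cycleGraph_sum_of_not_isAcyclic
    (fun v => (ncard_neighborSet_le_ncard_edgeSet v).trans hH) hcyc
  have := ncard_edgeSet_of_iso_cycleGraph_sum e
  omega

end DegreeTwo

section FiveEdges

variable {V W W' ι : Type*} {H : SimpleGraph V} {R : SimpleGraph W} {S : SimpleGraph W'} {k r : ℕ}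

theorem isIndepOrthRep_of_dualForms [Finite ι] [DecidableEq ι] {a b : ι → V}
    (hH : ∀ i j, H.Adj i j → ∃ q, s(i, j) = s(a q, b q)) {v : V → Fin r → ℝ}
    (hv : ∀ i, v i ≠ 0) (hort : ∀ q, v (a q) ⬝ᵥ v (b q) = 0) (B : ι → Matrix (Fin r) (Fin r) ℝ)
    (hB : ∀ q, (B q)ᵀ = B q)
    (hdual : ∀ q l, v (a l) ⬝ᵥ B q *ᵥ v (b l) = if q = l then 1 else 0) :
    IsIndepOrthRep H v where
  ne_zero := hv
  orthogonal i j hij := by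
    obtain ⟨q, hq⟩ := hH i j hij
    rcases Sym2.eq_iff.1 hq with ⟨rfl, rfl⟩ | ⟨rfl, rfl⟩
    exacts [hort q, dotProduct_comm (v (a q)) _ ▸ hort q]
  exists_form g := by
    have := Fintype.ofFinite ι
    let C := ∑ q, g s(a q, b q) • B q
    have hC : Cᵀ = C := by
      simp only [C, transpose_sum, transpose_smul, hB]
    have hval : ∀ l, v (a l) ⬝ᵥ C *ᵥ v (b l) = g s(a l, b l) := fun l => by
      simp [C, sum_mulVec, dotProduct_sum, smul_mulVec, hdual]
    refine ⟨C, hC, fun i j hij => ?_⟩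
    obtain ⟨l, hl⟩ := hH i j hij
    rw [hl]
    rcases Sym2.eq_iff.1 hl with ⟨rfl, rfl⟩ | ⟨rfl, rfl⟩
    exacts [hval l, dotProduct_mulVec_comm_of_transpose_eq hC _ _ ▸ hval l]

theorem isIndepOrthRep_cycleGraph_five :
    IsIndepOrthRep (SimpleGraph.cycleGraph 5)
      ![![(1 : ℝ), 0, 0], ![0, 1, 0], ![1, 0, 1], ![1, 1, -1], ![0, 1, 1]] := by
  refine isIndepOrthRep_of_dualForms (a := id) (b := (· + 1)) ?_ ?_ ?_
    ![!![0, 1, -1; 1, 0, -1; -1, -1, 0], !![-1, 0, 0; 0, 0, 1; 0, 1, 0],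
      !![1, 0, 0; 0, 0, 0; 0, 0, 0], !![0, 0, 0; 0, 1, 0; 0, 0, 0],
      !![0, 0, 1; 0, -1, 0; 1, 0, 0]] ?_ ?_
  · decide
  · intro q
    fin_cases q <;> simp
  · intro q
    fin_cases q <;> simp
  · intro q
    fin_cases q <;> ext i j <;> fin_cases i <;> fin_cases j <;> rfl
  · intro q l
    fin_cases q <;> fin_cases l <;> simp [vecHead, vecTail]

theorem isIndepOrthRep_cycleGraph_three_sum_pathGraph_three :
    IsIndepOrthRep (SimpleGraph.cycleGraph 3 ⊕g SimpleGraph.pathGraph 3)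
      (Sum.elim ![![(1 : ℝ), 0, 0], ![0, 1, 0], ![0, 0, 1]]
        ![![1, -1, 0], ![1, 1, 1], ![1, 0, -1]]) := by
  refine isIndepOrthRep_of_dualForms (a := ![.inl 0, .inl 1, .inl 2, .inr 0, .inr 1])
    (b := ![.inl 1, .inl 2, .inl 0, .inr 1, .inr 2]) ?_ ?_ ?_
    ![!![0, 1, 0; 1, 0, 0; 0, 0, 1], !![0, 0, 0; 0, -1, 1; 0, 1, -1],
      !![0, 0, 1; 0, 1, 0; 1, 0, 0], !![0, 0, 0; 0, -1, 0; 0, 0, 0],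
      !![0, 0, 0; 0, 0, 0; 0, 0, -1]] ?_ ?_
  · simp only [SimpleGraph.pathGraph_adj, Sum.forall, SimpleGraph.sum_adj]
    decide
  · rintro (q | q) <;> fin_cases q <;> simp
  · intro q
    fin_cases q <;> simp
  · intro q
    fin_cases q <;> ext i j <;> fin_cases i <;> fin_cases j <;> rfl
  · intro q l
    fin_cases q <;> fin_cases l <;> simp [vecHead, vecTail]

theorem isIndepOrthRep_pathGraph_six : ∃ v : Fin 6 → Fin 3 → ℝ,
    IsIndepOrthRep (SimpleGraph.pathGraph 6) v := by
  let φ : SimpleGraph.pathGraph 6 →g SimpleGraph.cycleGraph 5 :=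
    ⟨![0, 1, 2, 3, 4, 0], by simp only [SimpleGraph.pathGraph_adj]; decide⟩
  refine ⟨_, isIndepOrthRep_cycleGraph_five.comp φ ?_⟩
  have : ∀ i j i' j' : Fin 6, (i.val + 1 = j.val ∨ j.val + 1 = i.val) →
      (i'.val + 1 = j'.val ∨ j'.val + 1 = i'.val) → s(φ i, φ j) = s(φ i', φ j') →
        s(i, j) = s(i', j') := by
    decide
  rintro ⟨i, j⟩ he ⟨i', j'⟩ he' h
  exact this i j i' j' (SimpleGraph.pathGraph_adj.1 he) (SimpleGraph.pathGraph_adj.1 he') h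

theorem forall_mem_edgeSet_sum {p : Sym2 (V ⊕ W) → Prop} :
    (∀ e ∈ (H ⊕g R).edgeSet, p e) ↔
      (∀ e ∈ H.edgeSet, p (e.map Sum.inl)) ∧ ∀ e ∈ R.edgeSet, p (e.map Sum.inr) := by
  simp [Sym2.forall]

theorem injOn_edgeSet_map_sum_id (φ : R →g S) (hφ : R.edgeSet.InjOn (Sym2.map φ)) :
    (H ⊕g R).edgeSet.InjOn (Sym2.map (SimpleGraph.Hom.id.sum φ : H ⊕g R →g H ⊕g S)) := by
  have hl : (SimpleGraph.Hom.id.sum φ : H ⊕g R →g H ⊕g S) ∘ Sum.inl = Sum.inl := rfl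
  have hr : (SimpleGraph.Hom.id.sum φ : H ⊕g R →g H ⊕g S) ∘ Sum.inr = Sum.inr ∘ φ := rfl
  have hne : ∀ (e : Sym2 V) (e' : Sym2 W'), e.map Sum.inl ≠ e'.map Sum.inr := by
    simp [Sym2.forall]
  simp only [Set.InjOn, forall_mem_edgeSet_sum, Sym2.map_map, hl, hr]
  refine ⟨fun e _ => ⟨fun e' _ h => ?_, fun e' _ h => ?_⟩,
    fun e he => ⟨fun e' _ h => ?_, fun e' he' h => ?_⟩⟩
  · exact congrArg _ (Sym2.map.injective Sum.inl_injective h)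
  · exact absurd (h.trans (Sym2.map_map ..).symm) (hne e _)
  · exact absurd (h.symm.trans (Sym2.map_map ..).symm) (hne e' _)
  · rw [← Sym2.map_map, ← Sym2.map_map] at h
    exact congrArg _ (hφ he he' (Sym2.map.injective Sum.inr_injective h))

theorem IsIndepOrthRep.sum_bot {v : V → Fin r → ℝ} (hv : IsIndepOrthRep H v) (a : V) :
    IsIndepOrthRep (H ⊕g (⊥ : SimpleGraph W)) (v ∘ Sum.elim id fun _ => a) := by
  refine hv.comp ⟨Sum.elim id fun _ => a, ?_⟩ ?_
  · simp
  · simpa [Set.InjOn, forall_mem_edgeSet_sum, Sym2.map_map] using fun e _ e' _ => congrArg _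

theorem dotProduct_mulVec_smul_vecMulVec_add_smul_vecMulVec [Fintype ι] (a b : ℝ)
    (u v x y : ι → ℝ) :
    x ⬝ᵥ (a • vecMulVec u (star u) + b • vecMulVec v (star v)) *ᵥ y =
      a * (u ⬝ᵥ x * u ⬝ᵥ y) + b * (v ⬝ᵥ x * v ⬝ᵥ y) := by
  simp only [star_trivial, add_mulVec, smul_mulVec, vecMulVec_mulVec, dotProduct_add,
    dotProduct_smul, op_smul_eq_smul, smul_eq_mul, dotProduct_comm x u,
    dotProduct_comm x v]
  ring

/- With `u` normal to the diagonal `x₀, x₂` and `v` normal to the diagonal `x₁, x₃`, every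
combination of `u ⊗ u` and `v ⊗ v` vanishes on the sides of the four-cycle. The coefficients make
it vanish on the pair `y, z` as well. -/
theorem exists_posSemidef_of_cross_dotProduct_lt {x : Fin 4 → Fin 3 → ℝ} {y z : Fin 3 → ℝ}
    (hv : (x 1 ⨯₃ x 3) ⬝ᵥ y * (x 1 ⨯₃ x 3) ⬝ᵥ z < 0)
    (hu : 0 < (x 0 ⨯₃ x 2) ⬝ᵥ y * (x 0 ⨯₃ x 2) ⬝ᵥ z) :
    ∃ A : Matrix (Fin 3) (Fin 3) ℝ, A.PosSemidef ∧ y ⬝ᵥ A *ᵥ y ≠ 0 ∧ y ⬝ᵥ A *ᵥ z = 0 ∧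
      ∀ i, x i ⬝ᵥ A *ᵥ x (i + 1) = 0 := by
  set u := x 0 ⨯₃ x 2
  set v := x 1 ⨯₃ x 3
  refine ⟨-(v ⬝ᵥ y * v ⬝ᵥ z) • vecMulVec u (star u) + (u ⬝ᵥ y * u ⬝ᵥ z) • vecMulVec v (star v),
    ((posSemidef_vecMulVec_self_star u).smul (neg_pos.2 hv).le).add
      ((posSemidef_vecMulVec_self_star v).smul hu.le), ?_, ?_, fun i => ?_⟩
  all_goals rw [dotProduct_mulVec_smul_vecMulVec_add_smul_vecMulVec]
  · have huy : u ⬝ᵥ y ≠ 0 := left_ne_zero_of_mul hu.ne'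
    exact (add_pos_of_pos_of_nonneg (mul_pos (neg_pos.2 hv) (mul_self_pos.2 huy))
      (mul_nonneg hu.le (mul_self_nonneg _))).ne'
  · ring
  · have h₀ : u ⬝ᵥ x 0 = 0 := (dotProduct_comm _ _).trans (dot_self_cross _ _)
    have h₁ : v ⬝ᵥ x 1 = 0 := (dotProduct_comm _ _).trans (dot_self_cross _ _)
    have h₂ : u ⬝ᵥ x 2 = 0 := (dotProduct_comm _ _).trans (dot_cross_self _ _)
    have h₃ : v ⬝ᵥ x 3 = 0 := (dotProduct_comm _ _).trans (dot_cross_self _ _)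
    fin_cases i <;> simp [h₀, h₁, h₂, h₃]

theorem continuous_cross_dotProduct_mul (i j s t : ι) :
    Continuous fun N : Matrix ι (Fin 3) ℝ => (N i ⨯₃ N j) ⬝ᵥ N s * (N i ⨯₃ N j) ⬝ᵥ N t := by
  simp only [cross_apply, vec3_dotProduct, cons_val]
  fun_prop

theorem hasOpenStress_cycleGraph_four_sum [Fintype W] {s t : W} (hst : s ≠ t)
    (hR : R.edgeSet ⊆ {s(s, t)}) (hk : k + 3 ≤ Fintype.card (Fin 4 ⊕ W)) :
    HasOpenStress (SimpleGraph.cycleGraph 4 ⊕g R) k := by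
  classical
  let N₀ : Matrix (Fin 4 ⊕ W) (Fin 3) ℝ :=
    Sum.elim ![![0, 1, 0], ![1, 0, 0], ![0, 0, 1], ![0, 0, 1]]
      fun i => if i = s then ![1, 1, 0] else ![1, -1, 0]
  have hcont i j := (continuous_cross_dotProduct_mul (ι := Fin 4 ⊕ W) (.inl i) (.inl j) (.inr s)
    (.inr t)).continuousAt (x := N₀)
  have hv := (hcont 1 3).eventually_lt (continuousAt_const (y := 0))
    (by simp [N₀, cross_apply, hst.symm])
  have hu := (continuousAt_const (y := 0)).eventually_lt (hcont 0 2)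
    (by simp [N₀, cross_apply, hst.symm])
  refine hasOpenStress_of_eventually hk (N₀ := N₀) ?_
  filter_upwards [hu, hv] with N hu hv
  obtain ⟨A, hA, hss, hst₀, hcycle⟩ :=
    exists_posSemidef_of_cross_dotProduct_lt (x := fun i => N (.inl i)) hv hu
  have hAT : Aᵀ = A := hA.1
  refine ⟨A, hA, fun h0 => hss ?_, ?_, ?_⟩
  · rw [← mul_mul_transpose_apply, h0, Matrix.zero_apply]
  · simp only [transpose_mul, transpose_transpose, hAT, Matrix.mul_assoc]
  rintro (i | i) (j | j) hij
  · have hsucc : j = i + 1 ∨ i = j + 1 := by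
      simpa [SimpleGraph.cycleGraph_adj, sub_eq_iff_eq_add', or_comm] using hij
    rw [mul_mul_transpose_apply]
    rcases hsucc with rfl | rfl
    · exact hcycle i
    · exact dotProduct_mulVec_comm_of_transpose_eq hAT _ _ ▸ hcycle j
  · simp at hij
  · simp at hij
  · rw [mul_mul_transpose_apply]
    rcases Sym2.eq_iff.1 (hR hij) with ⟨rfl, rfl⟩ | ⟨rfl, rfl⟩
    · exact hst₀
    · exact dotProduct_mulVec_comm_of_transpose_eq hAT _ _ ▸ hst₀

variable [Fintype V]

theorem HasOpenStress.of_iso [Fintype W] {T : SimpleGraph W} (e : T ≃g H)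
    (h : HasOpenStress T k) : HasOpenStress H k := by
  refine .of_comap e.toEquiv.toEmbedding ?_
  rwa [show H.comap e.toEquiv.toEmbedding = T from by ext; exact e.map_adj_iff]

theorem hasOpenStress_of_isAcyclic (hH : H.IsAcyclic) (hdeg : ∀ v, (H.neighborSet v).ncard ≤ 2)
    (hE : H.edgeSet.ncard ≤ 5) (hk : k + 3 ≤ Fintype.card V) : HasOpenStress H k := by
  obtain ⟨φ, hφ⟩ := exists_injOn_hom_pathGraph hH hdeg hE
  obtain ⟨v, hv⟩ := isIndepOrthRep_pathGraph_six
  exact (hv.comp φ hφ).hasOpenStress hk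

theorem hasOpenStress_cycleGraph_three_sum [Fintype W]
    (hR : R.edgeSet.ncard ≤ 2) (hk : k + 3 ≤ Fintype.card (Fin 3 ⊕ W)) :
    HasOpenStress (SimpleGraph.cycleGraph 3 ⊕g R) k := by
  obtain ⟨φ, hφ⟩ := exists_injOn_hom_pathGraph (isAcyclic_of_ncard_edgeSet_le_two hR)
    (fun v => (ncard_neighborSet_le_ncard_edgeSet v).trans hR) hR
  exact (isIndepOrthRep_cycleGraph_three_sum_pathGraph_three.comp _
    (injOn_edgeSet_map_sum_id φ hφ)).hasOpenStress hk

theorem hasOpenStress_of_not_isAcyclic (hH : ¬ H.IsAcyclic)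
    (hdeg : ∀ v, (H.neighborSet v).ncard ≤ 2)
    (hE : H.edgeSet.ncard = 5) (hk : k + 3 ≤ Fintype.card V) : HasOpenStress H k := by
  classical
  obtain ⟨l, s, ⟨e⟩⟩ := exists_iso_cycleGraph_sum_of_not_isAcyclic hdeg hH
  rw [ncard_edgeSet_of_iso_cycleGraph_sum e] at hE
  rw [← Fintype.card_congr e.toEquiv] at hk
  refine .of_iso e ?_
  match l with
  | 0 => exact hasOpenStress_cycleGraph_three_sum (by omega) hk
  | 1 =>
    obtain ⟨⟨x, y⟩, hxy⟩ := Set.ncard_eq_one.1 (show (H.induce s).edgeSet.ncard = 1 by omega)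
    exact hasOpenStress_cycleGraph_four_sum
      ((H.induce s).ne_of_adj (hxy.ge (Set.mem_singleton _))) hxy.le hk
  | 2 =>
    have hbot : (H.induce s).edgeSet = ∅ :=
      (Set.ncard_eq_zero (Set.toFinite _)).1 (by omega)
    rw [SimpleGraph.edgeSet_eq_empty.1 hbot] at e ⊢
    exact (isIndepOrthRep_cycleGraph_five.sum_bot 0).hasOpenStress hk
  | l + 3 => omega

theorem hasOpenStress_of_ncard_edgeSet_le_five (hE : H.edgeSet.ncard ≤ 5)
    (hk : k + 3 ≤ Fintype.card V) : HasOpenStress H k := by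
  classical
  by_cases hv : ∃ v, (H.induce {v}ᶜ).edgeSet.ncard ≤ 2
  · obtain ⟨v, hv⟩ := hv
    refine .of_induce (s := {v}ᶜ) ((edgeTriplesConcurrent_of_ncard_le_two hv).hasOpenStress ?_)
    rw [Fintype.card_compl_set, Set.card_singleton]
    omega
  · push Not at hv
    simp only [ncard_edgeSet_induce_compl_singleton] at hv
    have hdeg : ∀ v, (H.neighborSet v).ncard ≤ 2 := fun v => by
      have := hv v
      omega
    by_cases hH : H.IsAcyclic
    · exact hasOpenStress_of_isAcyclic hH hdeg hE hk
    · obtain ⟨v, hv₂⟩ := exists_two_le_ncard_neighborSet_of_not_isAcyclic hH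
      have := hv v
      exact hasOpenStress_of_not_isAcyclic hH hdeg (by omega) hk

end FiveEdges

section MaximumLikelihoodThreshold

variable {n k d : ℕ} {G : SimpleGraph (Fin n)}

theorem hasOpenStress_of_not_isIndepGraph (hG : Gᶜ.edgeSet.ncard ≤ 5) (h : ¬ IsIndepGraph k G) :
    HasOpenStress Gᶜ (k + 1) := by
  have hcard := Fintype.card_fin n
  have h₀ : k + 1 < n := not_le.1 fun hle => h ((noConjugateForm_zero 0).isIndepGraph hle)
  by_cases h₁ : n ≤ k + 2
  · have hbot : Gᶜ = ⊥ := by_contra fun hne =>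
      h ((noConjugateForm_one_of_ne_bot hne).isIndepGraph h₁)
    exact hbot ▸ hasOpenStress_bot (by omega)
  by_cases h₂ : n ≤ k + 3
  · have hconc : EdgeTriplesConcurrent Gᶜ := by_contra fun hnot => by
      obtain ⟨N, hN⟩ := exists_noConjugateForm_two_of_not_edgeTriplesConcurrent hnot
      exact h (hN.isIndepGraph h₂)
    exact hconc.hasOpenStress (by omega)
  · exact hasOpenStress_of_ncard_edgeSet_le_five hG (by omega)

theorem isIndepGraph_self (G : SimpleGraph (Fin n)) : IsIndepGraph n G :=
  (noConjugateForm_zero 0).isIndepGraph (Nat.le_succ n)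

/-- The property whose least positive instance is the maximum likelihood threshold of `M`: for
almost every `n × d` data matrix the objective attains a minimum on `M`. -/
def HasAEMinimizer (d : ℕ) (M : Set (Matrix (Fin n) (Fin n) ℝ)) : Prop :=
  ∀ᵐ X : Fin n → Fin d → ℝ, ∃ K ∈ M, ∀ K' ∈ M,
    mlObjective (of X * (of X)ᵀ) K ≤ mlObjective (of X * (of X)ᵀ) K'

theorem mlt_eq_of_isLeast {M : Set (Matrix (Fin n) (Fin n) ℝ)}
    (hd : IsLeast {m | 0 < m ∧ HasAEMinimizer m M} d) : mlt n M = d :=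
  hd.csInf_eq

theorem IsIndepGraph.hasAEMinimizer (h : IsIndepGraph k G) :
    HasAEMinimizer (k + 1) (graphModel n G) := by
  obtain ⟨X₀, hX₀⟩ := isIndepGraph_iff_exists_data.1 h
  filter_upwards [ae_forall_mem_eq_zero_of_mul_eq_zero hX₀] with X hX
  exact (exists_isMinOn_graphModel_iff (of X)).2 fun K hK => hK.2.1 (hX K hK.2.2.1 hK.2.2.2)

theorem HasOpenStress.not_hasAEMinimizer (h : HasOpenStress Gᶜ d) :
    ¬ HasAEMinimizer d (graphModel n G) := by
  intro hae
  obtain ⟨X₀, hX₀⟩ := h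
  have hpos := Measure.measure_pos_of_mem_nhds (volume : Measure (Fin n → Fin d → ℝ)) hX₀
  obtain ⟨X, ⟨K, hK⟩, hmin⟩ :=
    ((frequently_ae_mem_iff.2 hpos.ne').and_eventually hae).exists
  exact (exists_isMinOn_graphModel_iff (of X)).1 hmin K hK

theorem hasAEMinimizer_succ_iff_isIndepGraph (hG : Gᶜ.edgeSet.ncard ≤ 5) :
    HasAEMinimizer (k + 1) (graphModel n G) ↔ IsIndepGraph k G :=
  ⟨fun h => by_contra fun hk => (hasOpenStress_of_not_isIndepGraph hG hk).not_hasAEMinimizer h,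
    fun h => h.hasAEMinimizer⟩

end MaximumLikelihoodThreshold

/-- If the complement of `G` has at most `5` edges, then `MLT(G) = d + 1`, where `d` is the
smallest nonnegative integer such that `G` is `d`-independent. -/
theorem mlt_eq_min_indep_of_compl_edges_le (n : ℕ) (G : SimpleGraph (Fin n))
    (h : Gᶜ.edgeSet.ncard ≤ 5) :
    ∃ d : ℕ, IsLeast {k : ℕ | IsIndepGraph k G} d ∧ mlt n (graphModel n G) = d + 1 := by
  classical
  have hex : ∃ k, IsIndepGraph k G := ⟨n, isIndepGraph_self G⟩
  have hspec : IsIndepGraph (Nat.find hex) G := Nat.find_spec hex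
  refine ⟨Nat.find hex, ⟨hspec, fun k hk => Nat.find_min' hex hk⟩, mlt_eq_of_isLeast
    ⟨⟨Nat.succ_pos _, hspec.hasAEMinimizer⟩, ?_⟩⟩
  rintro (_ | k) ⟨hpos, hmin⟩
  · exact absurd hpos (lt_irrefl 0)
  · exact Nat.succ_le_succ (Nat.find_min' hex ((hasAEMinimizer_succ_iff_isIndepGraph h).1 hmin))
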